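/- Let x > 0 and let φ ∈ (0, π/2] satisfy cos φ − (π/2 − φ)·sin φ > 0 and sin φ / (cos φ − (π/2 − φ)·sin φ) = x/π, and set ι = x / sin φ. Then for every ε > 0 there exists k₀ ∈ ℕ such that for every integer k ≥ k₀ and every real number j which is the k-th positive zero of J_{x·k}, one has −exp((1/3 + ε)·x) · π/(4k) ≤ j/k − ι ≤ −(1 − ε) · π/(4k). -/

import Mathlib

open Real Set

/-- The Bessel function of the first kind of order `ν`. -/
noncomputable def besselJ (ν x : ℝ) : ℝ :=
  ∑' m : ℕ, (-1 : ℝ) ^ m / (m.factorial * Real.Gamma (m + ν + 1)) * (x / 2) ^ (2 * (m : ℝ) + ν)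

/-- `j` is the `k`-th positive zero of the Bessel function `J_ν`. -/
def IsKthBesselZero (ν : ℝ) (k : ℕ) (j : ℝ) : Prop :=
  0 < j ∧ besselJ ν j = 0 ∧
    {t : ℝ | t ∈ Set.Ioo 0 j ∧ besselJ ν t = 0}.encard = (k - 1 : ℕ)

/-!
The phase `θ_κ(x) = √(x² - κ²) - κ arccos (κ / x)` makes `(x² - κ²)^(-1/4) sin (ω (θ_κ(x) - c))` a
solution of a perturbed Bessel equation, so Sturm comparison bounds the increments of `θ_ν` between
consecutive zeros of `J_ν` from both sides: they are below `π`, and above `π - O(1/n²)`, uniformly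
for `ν = O(n)`. Since `θ_{λκ}(λx) = λ θ_κ(x)`, the theorem follows from the limit
`θ_ν(j_{ν,n}) - n π → -π/4` for fixed `ν`: it persists for `ν = x n` and then determines `j_{xn,n}`
up to `o(1)`, the point `ι` being the solution of `θ_x(ι) = π` and `cos φ` the slope of `θ_x` there.

For fixed `ν` the limit is McMahon's `j_{ν,n} - (n + ν/2 - 1/4) π → 0`. Hankel's integral, a
solution `x^ν e^{ix} K(x)` of Bessel's equation whose Wronskian with `J_ν` is real, gives the limit
modulo `π`. Comparing zeros of different orders moves the remaining integer from `ν` to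
`(ν, ν + 1]`, and it vanishes for `J_{1/2}`, which is a multiple of `x^{-1/2} sin x`.
-/

open Filter Topology MeasureTheory

section Sturm

/-- `u` solves the Sturm–Liouville equation `(p u')' = -q u` on `(a, b)`, written as a first-order
system for `u` and its flux `u₁ = p u'`, both of which extend continuously to `[a, b]`. -/
structure IsSturmLiouvilleSolution (p q u u₁ : ℝ → ℝ) (a b : ℝ) : Prop where
  continuousOn : ContinuousOn u (Icc a b)
  continuousOn_flux : ContinuousOn u₁ (Icc a b)
  hasDerivAt : ∀ x ∈ Ioo a b, HasDerivAt u (u₁ x / p x) x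
  hasDerivAt_flux : ∀ x ∈ Ioo a b, HasDerivAt u₁ (-(q x * u x)) x

variable {p q Q u u₁ v v₁ : ℝ → ℝ} {a b : ℝ}

namespace IsSturmLiouvilleSolution

lemma neg (hu : IsSturmLiouvilleSolution p q u u₁ a b) :
    IsSturmLiouvilleSolution p q (-u) (-u₁) a b where
  continuousOn := hu.continuousOn.neg
  continuousOn_flux := hu.continuousOn_flux.neg
  hasDerivAt x hx := (hu.hasDerivAt x hx).neg.congr_deriv (by simp only [Pi.neg_apply]; ring)
  hasDerivAt_flux x hx := (hu.hasDerivAt_flux x hx).neg.congr_deriv (by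
    simp only [Pi.neg_apply]; ring)

lemma comp_neg (hu : IsSturmLiouvilleSolution p q u u₁ a b) :
    IsSturmLiouvilleSolution (fun x ↦ p (-x)) (fun x ↦ q (-x)) (fun x ↦ u (-x)) (fun x ↦ -u₁ (-x))
      (-b) (-a) := by
  have hIcc : MapsTo (fun x : ℝ ↦ -x) (Icc (-b) (-a)) (Icc a b) := fun x hx ↦
    ⟨by linarith [hx.2], by linarith [hx.1]⟩
  have hIoo : MapsTo (fun x : ℝ ↦ -x) (Ioo (-b) (-a)) (Ioo a b) := fun x hx ↦
    ⟨by linarith [hx.2], by linarith [hx.1]⟩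
  refine ⟨hu.continuousOn.comp (by fun_prop) hIcc,
    (hu.continuousOn_flux.comp (by fun_prop) hIcc).neg, fun x hx ↦ ?_, fun x hx ↦ ?_⟩
  · exact ((hu.hasDerivAt _ (hIoo hx)).comp x (hasDerivAt_neg x)).congr_deriv (by ring)
  · exact ((hu.hasDerivAt_flux _ (hIoo hx)).comp x (hasDerivAt_neg x)).neg.congr_deriv (by ring)

lemma flux_left_nonneg (hu : IsSturmLiouvilleSolution p q u u₁ a b) (hab : a < b)
    (hp : ∀ x ∈ Ioo a b, 0 < p x) (hua : u a = 0) (hpos : ∀ x ∈ Ioo a b, 0 < u x) : 0 ≤ u₁ a := by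
  by_contra! hneg
  have hnear : ∀ᶠ x in 𝓝[>] a, u₁ x < 0 :=
    (((hu.continuousOn_flux a ⟨le_rfl, hab.le⟩).mono_of_mem_nhdsWithin
      (Icc_mem_nhdsGT hab)).eventually (gt_mem_nhds hneg))
  obtain ⟨c, hac, hc⟩ := mem_nhdsGT_iff_exists_Ioo_subset.1
    (hnear.and (Ioo_mem_nhdsGT hab))
  obtain ⟨d, hd⟩ := nonempty_Ioo.2 (show a < c from hac)
  have hsub : ∀ x ∈ Ioo a d, u₁ x < 0 ∧ x ∈ Ioo a b := fun x hx ↦ hc ⟨hx.1, hx.2.trans hd.2⟩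
  have hdb : d ∈ Ioo a b := (hc hd).2
  have hanti : AntitoneOn u (Icc a d) := by
    refine antitoneOn_of_hasDerivWithinAt_nonpos (f' := fun x ↦ u₁ x / p x) (convex_Icc a d)
      (hu.continuousOn.mono (Icc_subset_Icc_right hdb.2.le)) (fun x hx ↦ ?_) (fun x hx ↦ ?_) <;>
    rw [interior_Icc] at hx
    · exact (hu.hasDerivAt x (hsub x hx).2).hasDerivWithinAt
    · exact (div_neg_of_neg_of_pos (hsub x hx).1 (hp x (hsub x hx).2)).le
  have := hanti ⟨le_rfl, hd.1.le⟩ ⟨hd.1.le, le_rfl⟩ hd.1.le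
  linarith [hpos d hdb]

lemma flux_right_nonpos (hu : IsSturmLiouvilleSolution p q u u₁ a b) (hab : a < b)
    (hp : ∀ x ∈ Ioo a b, 0 < p x) (hub : u b = 0) (hpos : ∀ x ∈ Ioo a b, 0 < u x) : u₁ b ≤ 0 := by
  have hIoo : ∀ x ∈ Ioo (-b) (-a), -x ∈ Ioo a b := fun x hx ↦
    ⟨by linarith [hx.2], by linarith [hx.1]⟩
  simpa using hu.comp_neg.flux_left_nonneg (neg_lt_neg hab) (fun x hx ↦ hp _ (hIoo x hx))
    (by simpa using hub) (fun x hx ↦ hpos _ (hIoo x hx))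

lemma hasDerivAt_wronskian (hu : IsSturmLiouvilleSolution p q u u₁ a b)
    (hv : IsSturmLiouvilleSolution p Q v v₁ a b) {x : ℝ} (hx : x ∈ Ioo a b) :
    HasDerivAt (fun x ↦ u₁ x * v x - u x * v₁ x) ((Q x - q x) * (u x * v x)) x := by
  refine (((hu.hasDerivAt_flux x hx).mul (hv.hasDerivAt x hx)).sub
    ((hu.hasDerivAt x hx).mul (hv.hasDerivAt_flux x hx))).congr_deriv ?_
  ring

lemma continuousOn_wronskian (hu : IsSturmLiouvilleSolution p q u u₁ a b)
    (hv : IsSturmLiouvilleSolution p Q v v₁ a b) :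
    ContinuousOn (fun x ↦ u₁ x * v x - u x * v₁ x) (Icc a b) :=
  (hu.continuousOn_flux.mul hv.continuousOn).sub (hu.continuousOn.mul hv.continuousOn_flux)

lemma strictMonoOn_wronskian (hu : IsSturmLiouvilleSolution p q u u₁ a b)
    (hv : IsSturmLiouvilleSolution p Q v v₁ a b) (hqQ : ∀ x ∈ Ioo a b, q x < Q x)
    (hu0 : ∀ x ∈ Ioo a b, 0 < u x) (hv0 : ∀ x ∈ Ioo a b, 0 < v x) :
    StrictMonoOn (fun x ↦ u₁ x * v x - u x * v₁ x) (Icc a b) := by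
  refine strictMonoOn_of_hasDerivWithinAt_pos (convex_Icc a b) (hu.continuousOn_wronskian hv)
    (f' := fun x ↦ (Q x - q x) * (u x * v x)) (fun x hx ↦ ?_) (fun x hx ↦ ?_) <;>
  rw [interior_Icc] at hx
  · exact (hu.hasDerivAt_wronskian hv hx).hasDerivWithinAt
  · exact mul_pos (sub_pos.2 (hqQ x hx)) (mul_pos (hu0 x hx) (hv0 x hx))

lemma wronskian_eq (hu : IsSturmLiouvilleSolution p q u u₁ a b)
    (hv : IsSturmLiouvilleSolution p q v v₁ a b) (hab : a < b) :
    u₁ b * v b - u b * v₁ b = u₁ a * v a - u a * v₁ a := by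
  obtain ⟨c, -, hslope⟩ := exists_hasDerivAt_eq_slope _ _ hab (hu.continuousOn_wronskian hv)
    fun x hx ↦ hu.hasDerivAt_wronskian hv hx
  rw [sub_self, zero_mul, eq_comm, div_eq_zero_iff, sub_eq_zero] at hslope
  exact hslope.resolve_right (sub_pos.2 hab).ne'

lemma not_forall_pos_of_lt (hu : IsSturmLiouvilleSolution p q u u₁ a b)
    (hv : IsSturmLiouvilleSolution p Q v v₁ a b) (hab : a < b) (hp : ∀ x ∈ Ioo a b, 0 < p x)
    (hqQ : ∀ x ∈ Ioo a b, q x < Q x) (hua : u a = 0) (hub : u b = 0)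
    (hu0 : ∀ x ∈ Ioo a b, 0 < u x) : ¬ ∀ x ∈ Ioo a b, 0 < v x := by
  intro hv0
  have hvIcc : ∀ x ∈ Icc a b, 0 ≤ v x := by
    have hv' := hv.continuousOn
    rw [← closure_Ioo hab.ne] at hv' ⊢
    exact fun x hx ↦ le_on_closure (fun y hy ↦ (hv0 y hy).le) continuousOn_const hv' hx
  have hW := hu.strictMonoOn_wronskian hv hqQ hu0 hv0 (left_mem_Icc.2 hab.le)
    (right_mem_Icc.2 hab.le) hab
  have hWa := mul_nonneg (hu.flux_left_nonneg hab hp hua hu0) (hvIcc a (left_mem_Icc.2 hab.le))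
  have hWb := mul_nonpos_of_nonpos_of_nonneg (hu.flux_right_nonpos hab hp hub hu0)
    (hvIcc b (right_mem_Icc.2 hab.le))
  simp only [hua, hub, zero_mul, sub_zero] at hW
  linarith

end IsSturmLiouvilleSolution

lemma forall_pos_or_forall_neg_of_ne_zero {f : ℝ → ℝ} {s : Set ℝ} (hs : s.OrdConnected)
    (hf : ContinuousOn f s) (hne : ∀ x ∈ s, f x ≠ 0) :
    (∀ x ∈ s, 0 < f x) ∨ ∀ x ∈ s, 0 < (-f) x := by
  by_contra! h
  obtain ⟨⟨x, hx, hfx⟩, y, hy, hfy⟩ := h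
  obtain ⟨z, hz, hfz⟩ := (hs.isPreconnected.intermediate_value hx hy hf)
    ⟨hfx, by simpa using hfy⟩
  exact hne z hz hfz

/-- **Sturm–Picone comparison theorem**. -/
theorem IsSturmLiouvilleSolution.exists_zero_of_lt
    (hu : IsSturmLiouvilleSolution p q u u₁ a b) (hv : IsSturmLiouvilleSolution p Q v v₁ a b)
    (hab : a < b) (hp : ∀ x ∈ Ioo a b, 0 < p x) (hqQ : ∀ x ∈ Ioo a b, q x < Q x)
    (hua : u a = 0) (hub : u b = 0) (hu0 : ∀ x ∈ Ioo a b, u x ≠ 0) : ∃ x ∈ Ioo a b, v x = 0 := by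
  by_contra! hv0
  rcases forall_pos_or_forall_neg_of_ne_zero ordConnected_Ioo
    (hu.continuousOn.mono Ioo_subset_Icc_self) hu0 with hu' | hu' <;>
  rcases forall_pos_or_forall_neg_of_ne_zero ordConnected_Ioo
    (hv.continuousOn.mono Ioo_subset_Icc_self) hv0 with hv' | hv'
  · exact hu.not_forall_pos_of_lt hv hab hp hqQ hua hub hu' hv'
  · exact hu.not_forall_pos_of_lt hv.neg hab hp hqQ hua hub hu' hv'
  · exact hu.neg.not_forall_pos_of_lt hv hab hp hqQ (by simpa using hua) (by simpa using hub)
      hu' hv'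
  · exact hu.neg.not_forall_pos_of_lt hv.neg hab hp hqQ (by simpa using hua) (by simpa using hub)
      hu' hv'

end Sturm

section Series

variable {ν : ℝ}

/-- The coefficient of `y ^ m` in the entire function `g_ν` with `J_ν(x) = (x/2)^ν g_ν(x²/4)`. -/
noncomputable def besselCoeff (ν : ℝ) (m : ℕ) : ℝ :=
  (-1 : ℝ) ^ m / (m.factorial * Real.Gamma (m + ν + 1))

/-- The entire function `g_ν` with `J_ν(x) = (x/2)^ν g_ν(x²/4)`. -/
noncomputable def besselSeries (ν y : ℝ) : ℝ := ∑' m : ℕ, besselCoeff ν m * y ^ m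

lemma Gamma_add_one_le_Gamma_nat_add (hν : 0 ≤ ν) (m : ℕ) :
    Real.Gamma (ν + 1) ≤ Real.Gamma (m + ν + 1) := by
  induction m with
  | zero => simp
  | succ m ih =>
    have hΓ : 0 < Real.Gamma (m + ν + 1) := Real.Gamma_pos_of_pos (by positivity)
    calc Real.Gamma (ν + 1) ≤ Real.Gamma (m + ν + 1) := ih
      _ ≤ (m + ν + 1) * Real.Gamma (m + ν + 1) :=
        le_mul_of_one_le_left hΓ.le (by linarith [m.cast_nonneg (α := ℝ)])
      _ = Real.Gamma ((m + 1 : ℕ) + ν + 1) := by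
        rw [← Real.Gamma_add_one (by positivity), Nat.cast_succ, add_right_comm (m : ℝ) ν 1]

lemma abs_besselCoeff_le (hν : 0 ≤ ν) (m : ℕ) :
    |besselCoeff ν m| ≤ 1 / Real.Gamma (ν + 1) * (1 / m.factorial) := by
  have : 0 < Real.Gamma (ν + 1) := Real.Gamma_pos_of_pos (by positivity)
  have : 0 < Real.Gamma (m + ν + 1) := Real.Gamma_pos_of_pos (by positivity)
  rw [besselCoeff, abs_div, abs_pow, abs_neg, abs_one, one_pow, abs_of_pos (by positivity),
    ← one_div_mul_one_div, mul_comm]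
  gcongr
  exact Gamma_add_one_le_Gamma_nat_add hν m

lemma besselCoeff_succ_mul (ν : ℝ) (m : ℕ) :
    besselCoeff ν (m + 1) * ((m + 1 : ℕ) : ℝ) = -besselCoeff (ν + 1) m := by
  have hf : (m.factorial : ℝ) ≠ 0 := by positivity
  have hm : (m : ℝ) + 1 ≠ 0 := by positivity
  rw [besselCoeff, besselCoeff, show ((m + 1 : ℕ) : ℝ) + ν + 1 = m + (ν + 1) + 1 by push_cast; ring,
    Nat.factorial_succ, pow_succ]
  push_cast
  rcases eq_or_ne (Real.Gamma (m + (ν + 1) + 1)) 0 with hΓ | hΓ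
  · simp [hΓ]
  · field_simp

lemma besselCoeff_add_one (hν : 0 ≤ ν) (m : ℕ) :
    besselCoeff ν m = (m + ν + 1) * besselCoeff (ν + 1) m := by
  have hm : (m : ℝ) + ν + 1 ≠ 0 := by positivity
  rw [besselCoeff, besselCoeff, ← add_assoc (m : ℝ) ν 1, Real.Gamma_add_one hm]
  field_simp

lemma summable_besselSeries (hν : 0 ≤ ν) (y : ℝ) : Summable fun m ↦ besselCoeff ν m * y ^ m := by
  refine ((Real.summable_pow_div_factorial |y|).mul_left (1 / Real.Gamma (ν + 1))).of_norm_bounded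
    fun m ↦ ?_
  rw [Real.norm_eq_abs, abs_mul, abs_pow]
  calc |besselCoeff ν m| * |y| ^ m
      ≤ 1 / Real.Gamma (ν + 1) * (1 / m.factorial) * |y| ^ m := by
        gcongr; exact abs_besselCoeff_le hν m
    _ = 1 / Real.Gamma (ν + 1) * (|y| ^ m / m.factorial) := by ring

lemma hasSum_deriv_besselSeries (hν : 0 ≤ ν) (y : ℝ) :
    HasSum (fun m ↦ besselCoeff ν m * (m * y ^ (m - 1))) (-besselSeries (ν + 1) y) := by
  rw [← hasSum_nat_add_iff' 1]
  simp only [Finset.sum_range_one, Nat.cast_zero, zero_mul, mul_zero, sub_zero,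
    Nat.add_sub_cancel, ← mul_assoc, besselCoeff_succ_mul, neg_mul]
  exact (summable_besselSeries (by positivity) y).hasSum.neg

lemma hasDerivAt_besselSeries (hν : 0 ≤ ν) (y : ℝ) :
    HasDerivAt (besselSeries ν) (-besselSeries (ν + 1) y) y := by
  set R : ℝ := |y| + 1 with hR
  have : 0 ≤ R := by positivity
  have hyR : y ∈ Metric.ball (0 : ℝ) R := by simp [hR]
  have hbound : Summable fun m : ℕ ↦
      1 / Real.Gamma (ν + 1) * (m * R ^ (m - 1) / m.factorial) := by
    refine Summable.mul_left _ ((summable_nat_add_iff 1).1 ?_)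
    refine (Real.summable_pow_div_factorial R).congr fun m ↦ ?_
    rw [Nat.factorial_succ, Nat.add_sub_cancel]
    push_cast
    field_simp
  have hderiv := hasDerivAt_tsum_of_isPreconnected (g := fun m y ↦ besselCoeff ν m * y ^ m)
    (g' := fun m y ↦ besselCoeff ν m * (m * y ^ (m - 1))) hbound Metric.isOpen_ball
    (convex_ball (0 : ℝ) R).isPreconnected
    (fun m z _ ↦ (hasDerivAt_pow m z).const_mul (besselCoeff ν m)) (fun m z hz ↦ ?_) hyR
    (summable_besselSeries hν y) hyR
  · exact hderiv.congr_deriv (hasSum_deriv_besselSeries hν y).tsum_eq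
  · rw [mem_ball_zero_iff, Real.norm_eq_abs] at hz
    rw [Real.norm_eq_abs, abs_mul, abs_mul, abs_pow, Nat.abs_cast]
    calc |besselCoeff ν m| * (m * |z| ^ (m - 1))
        ≤ 1 / Real.Gamma (ν + 1) * (1 / m.factorial) * (m * R ^ (m - 1)) := by
          gcongr; exact abs_besselCoeff_le hν m
      _ = 1 / Real.Gamma (ν + 1) * (m * R ^ (m - 1) / m.factorial) := by ring

lemma continuous_besselSeries (hν : 0 ≤ ν) : Continuous (besselSeries ν) :=
  continuous_iff_continuousAt.2 fun y ↦ (hasDerivAt_besselSeries hν y).continuousAt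

lemma besselSeries_recurrence (hν : 0 ≤ ν) (y : ℝ) :
    besselSeries ν y = (ν + 1) * besselSeries (ν + 1) y - y * besselSeries (ν + 2) y := by
  have hderiv : HasSum (fun m ↦ besselCoeff (ν + 1) m * (m * y ^ (m - 1)))
      (-besselSeries (ν + 2) y) := by
    convert hasSum_deriv_besselSeries (ν := ν + 1) (by positivity) y using 3; ring
  have hsum := ((summable_besselSeries (ν := ν + 1) (by positivity) y).hasSum.mul_left
    (ν + 1)).add (hderiv.mul_left y)
  rw [show (ν + 1) * besselSeries (ν + 1) y - y * besselSeries (ν + 2) y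
    = (ν + 1) * besselSeries (ν + 1) y + y * -besselSeries (ν + 2) y by ring]
  refine HasSum.tsum_eq (hsum.congr_fun fun m ↦ ?_)
  rw [besselCoeff_add_one hν]
  cases m with
  | zero => simp
  | succ m => rw [Nat.add_sub_cancel, pow_succ]; push_cast; ring

lemma besselSeries_zero_pos (hν : 0 ≤ ν) : 0 < besselSeries ν 0 := by
  have hΓ : 0 < Real.Gamma (ν + 1) := Real.Gamma_pos_of_pos (by positivity)
  rw [besselSeries, tsum_eq_single 0 fun m hm ↦ by simp [hm]]
  simpa [besselCoeff] using hΓ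

end Series

section Bessel

variable {ν x : ℝ}

lemma besselJ_eq_rpow_mul_besselSeries (hν : 0 ≤ ν) (hx : 0 ≤ x) :
    besselJ ν x = (x / 2) ^ ν * besselSeries ν (x ^ 2 / 4) := by
  rw [besselJ, besselSeries, ← tsum_mul_left]
  refine tsum_congr fun m ↦ ?_
  have hpow : (x / 2) ^ (2 * (m : ℝ)) = (x ^ 2 / 4) ^ m := by
    rw [show 2 * (m : ℝ) = (2 * m : ℕ) by push_cast; ring, rpow_natCast, pow_mul]
    ring
  rw [rpow_add_of_nonneg (by positivity) (by positivity) hν, hpow, besselCoeff]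
  ring

lemma hasDerivAt_besselJ (hν : 0 ≤ ν) (hx : 0 < x) :
    HasDerivAt (besselJ ν) (ν / x * besselJ ν x - besselJ (ν + 1) x) x := by
  have hpow : HasDerivAt (fun x : ℝ ↦ (x / 2) ^ ν) (1 / 2 * ν * (x / 2) ^ (ν - 1)) x :=
    ((hasDerivAt_id x).div_const 2).rpow_const (Or.inl (by simpa using hx.ne'))
  have hsq : HasDerivAt (fun x : ℝ ↦ x ^ 2 / 4) (x / 2) x :=
    ((hasDerivAt_pow 2 x).div_const 4).congr_deriv (by norm_num; ring)
  have hseries : HasDerivAt (fun x : ℝ ↦ besselSeries ν (x ^ 2 / 4))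
      (-besselSeries (ν + 1) (x ^ 2 / 4) * (x / 2)) x :=
    (hasDerivAt_besselSeries hν (x ^ 2 / 4)).comp (h := fun x : ℝ ↦ x ^ 2 / 4) x hsq
  refine ((hpow.mul hseries).congr_of_eventuallyEq ?_).congr_deriv ?_
  · filter_upwards [lt_mem_nhds hx] with y hy using besselJ_eq_rpow_mul_besselSeries hν hy.le
  · rw [besselJ_eq_rpow_mul_besselSeries hν hx.le,
      besselJ_eq_rpow_mul_besselSeries (by positivity) hx.le, rpow_sub_one (by positivity),
      rpow_add_one (by positivity)]
    field_simp
    ring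

lemma besselJ_add_two (hν : 0 ≤ ν) (hx : 0 < x) :
    besselJ (ν + 2) x = 2 * (ν + 1) / x * besselJ (ν + 1) x - besselJ ν x := by
  rw [besselJ_eq_rpow_mul_besselSeries hν hx.le,
    besselJ_eq_rpow_mul_besselSeries (by positivity) hx.le,
    besselJ_eq_rpow_mul_besselSeries (by positivity) hx.le, rpow_add_one (by positivity),
    rpow_add (by positivity), rpow_two, besselSeries_recurrence hν]
  field_simp
  ring

lemma continuousOn_besselJ (hν : 0 ≤ ν) : ContinuousOn (besselJ ν) (Ici 0) := by
  have hcont : Continuous fun x : ℝ ↦ (x / 2) ^ ν * besselSeries ν (x ^ 2 / 4) :=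
    ((continuous_id.div_const 2).rpow_const fun _ ↦ Or.inr hν).mul
      ((continuous_besselSeries hν).comp (by fun_prop))
  exact hcont.continuousOn.congr fun x hx ↦ besselJ_eq_rpow_mul_besselSeries hν hx

lemma eventually_besselJ_pos (hν : 0 ≤ ν) : ∀ᶠ x in 𝓝[>] (0 : ℝ), 0 < besselJ ν x := by
  have hcont : Continuous fun x : ℝ ↦ besselSeries ν (x ^ 2 / 4) :=
    (continuous_besselSeries hν).comp (by fun_prop)
  have hnear : ∀ᶠ x in 𝓝 (0 : ℝ), 0 < besselSeries ν (x ^ 2 / 4) :=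
    hcont.continuousAt.eventually (lt_mem_nhds (by simpa using besselSeries_zero_pos hν))
  filter_upwards [nhdsWithin_le_nhds hnear, self_mem_nhdsWithin] with x hx (hx0 : 0 < x)
  rw [besselJ_eq_rpow_mul_besselSeries hν hx0.le]
  positivity

/-- `besselXDeriv ν x = x J_ν'(x)`, the flux of `J_ν` in the self-adjoint form
`(x u')' = -(x - ν²/x) u` of Bessel's equation. -/
noncomputable def besselXDeriv (ν x : ℝ) : ℝ := ν * besselJ ν x - x * besselJ (ν + 1) x

lemma hasDerivAt_besselJ' (hν : 0 ≤ ν) (hx : 0 < x) :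
    HasDerivAt (besselJ ν) (besselXDeriv ν x / x) x :=
  (hasDerivAt_besselJ hν hx).congr_deriv (by rw [besselXDeriv]; field_simp)

lemma hasDerivAt_besselXDeriv (hν : 0 ≤ ν) (hx : 0 < x) :
    HasDerivAt (besselXDeriv ν) (-((x - ν ^ 2 / x) * besselJ ν x)) x := by
  refine (((hasDerivAt_besselJ hν hx).const_mul ν).sub ((hasDerivAt_id x).mul
    (hasDerivAt_besselJ (ν := ν + 1) (by positivity) hx))).congr_deriv ?_
  rw [add_assoc, one_add_one_eq_two, besselJ_add_two hν hx]
  simp only [id]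
  field_simp
  ring

lemma continuousOn_besselXDeriv (hν : 0 ≤ ν) : ContinuousOn (besselXDeriv ν) (Ici 0) :=
  ((continuousOn_besselJ hν).const_smul ν).sub
    (continuousOn_id.mul (continuousOn_besselJ (by positivity)))

lemma isSturmLiouvilleSolution_besselJ (hν : 0 ≤ ν) {a b : ℝ} (ha : 0 ≤ a) :
    IsSturmLiouvilleSolution id (fun x ↦ x - ν ^ 2 / x) (besselJ ν) (besselXDeriv ν) a b where
  continuousOn := (continuousOn_besselJ hν).mono fun _ hx ↦ ha.trans hx.1
  continuousOn_flux := (continuousOn_besselXDeriv hν).mono fun _ hx ↦ ha.trans hx.1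
  hasDerivAt _ hx := hasDerivAt_besselJ' hν (ha.trans_lt hx.1)
  hasDerivAt_flux _ hx := hasDerivAt_besselXDeriv hν (ha.trans_lt hx.1)

lemma besselJ_mul_besselXDeriv_nonneg (hν : 0 ≤ ν) (hx : x ∈ Icc 0 ν) :
    0 ≤ besselJ ν x * besselXDeriv ν x := by
  have hmono : MonotoneOn (fun y ↦ besselJ ν y * besselXDeriv ν y) (Icc 0 ν) := by
    refine monotoneOn_of_hasDerivWithinAt_nonneg
      (f' := fun y ↦ besselXDeriv ν y ^ 2 / y + (ν ^ 2 - y ^ 2) / y * besselJ ν y ^ 2)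
      (convex_Icc 0 ν) (((continuousOn_besselJ hν).mul (continuousOn_besselXDeriv hν)).mono
        Icc_subset_Ici_self) (fun y hy ↦ ?_) (fun y hy ↦ ?_) <;>
    obtain ⟨hy0, hyν⟩ : y ∈ Ioo 0 ν := by rwa [interior_Icc] at hy
    · refine ((hasDerivAt_besselJ' hν hy0).mul
        (hasDerivAt_besselXDeriv hν hy0)).hasDerivWithinAt.congr_deriv ?_
      field_simp
      ring
    · have : 0 ≤ ν ^ 2 - y ^ 2 := by nlinarith
      positivity
  have hzero : besselJ ν 0 * besselXDeriv ν 0 = ν * besselJ ν 0 ^ 2 := by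
    rw [besselXDeriv]; ring
  have h0 : (0 : ℝ) ∈ Icc 0 ν := ⟨le_rfl, hν⟩
  exact (by rw [hzero]; positivity : 0 ≤ besselJ ν 0 * besselXDeriv ν 0).trans (hmono h0 hx hx.1)

lemma besselJ_ne_zero_of_le (hν : 0 ≤ ν) (hx : 0 < x) (hxν : x ≤ ν) : besselJ ν x ≠ 0 := by
  have hmono : MonotoneOn (fun y ↦ besselJ ν y ^ 2) (Icc 0 ν) := by
    refine monotoneOn_of_hasDerivWithinAt_nonneg
      (f' := fun y ↦ 2 * (besselJ ν y * besselXDeriv ν y) / y) (convex_Icc 0 ν)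
      (((continuousOn_besselJ hν).mono Icc_subset_Ici_self).pow 2) (fun y hy ↦ ?_)
      (fun y hy ↦ ?_) <;>
    rw [interior_Icc] at hy
    · exact ((hasDerivAt_besselJ' hν hy.1).pow 2).hasDerivWithinAt.congr_deriv (by
        norm_num; ring)
    · have := besselJ_mul_besselXDeriv_nonneg hν (Ioo_subset_Icc_self hy)
      have := hy.1
      positivity
  obtain ⟨y, hJy, hy0, hyx⟩ := ((eventually_besselJ_pos hν).and (Ioo_mem_nhdsGT hx)).exists
  have hle : besselJ ν y ^ 2 ≤ besselJ ν x ^ 2 :=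
    hmono ⟨hy0.le, hyx.le.trans hxν⟩ ⟨hx.le, hxν⟩ hyx.le
  exact fun h ↦ absurd hle (by rw [h]; simpa using hJy.ne')

-- Two consecutive orders vanishing at `x` would, by the recurrence, make all higher orders vanish
-- there, although `J_μ` has no zero in `(0, μ]`.
lemma besselJ_add_one_ne_zero (hν : 0 ≤ ν) (hx : 0 < x) (h : besselJ ν x = 0) :
    besselJ (ν + 1) x ≠ 0 := by
  intro h1
  have hall : ∀ n : ℕ, besselJ (ν + n) x = 0 ∧ besselJ (ν + n + 1) x = 0 := by
    intro n
    induction n with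
    | zero => simpa using ⟨h, h1⟩
    | succ n ih =>
      have hrec := besselJ_add_two (ν := ν + n) (by positivity) hx
      rw [ih.1, ih.2] at hrec
      refine ⟨by rw [Nat.cast_succ, ← add_assoc]; exact ih.2, ?_⟩
      rw [show ν + (n + 1 : ℕ) + 1 = ν + n + 2 by push_cast; ring, hrec]
      ring
  obtain ⟨n, hn⟩ := exists_nat_ge x
  exact besselJ_ne_zero_of_le (by positivity) hx (hn.trans (le_add_of_nonneg_left hν)) (hall n).1

lemma besselXDeriv_ne_zero (hν : 0 ≤ ν) (hx : 0 < x) (h : besselJ ν x = 0) :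
    besselXDeriv ν x ≠ 0 := by
  rw [besselXDeriv, h, mul_zero, zero_sub]
  exact neg_ne_zero.2 (mul_ne_zero hx.ne' (besselJ_add_one_ne_zero hν hx h))

lemma lt_of_besselJ_eq_zero (hν : 0 ≤ ν) (hx : 0 < x) (h : besselJ ν x = 0) : ν < x := by
  by_contra! hxν
  exact besselJ_ne_zero_of_le hν hx hxν h

-- The singular endpoint `a = 0` is allowed: for `ν > 0`, `J_ν(0) = 0`.
lemma exists_besselJ_eq_zero_of_lt {μ a b : ℝ} (hμ : 0 ≤ μ) (hμν : μ < ν) (ha : 0 ≤ a)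
    (hab : a < b) (hJa : besselJ ν a = 0) (hJb : besselJ ν b = 0)
    (hne : ∀ y ∈ Ioo a b, besselJ ν y ≠ 0) : ∃ y ∈ Ioo a b, besselJ μ y = 0 := by
  refine (isSturmLiouvilleSolution_besselJ (hμ.trans hμν.le) ha).exists_zero_of_lt
    (isSturmLiouvilleSolution_besselJ hμ ha) hab (fun y hy ↦ ha.trans_lt hy.1) (fun y hy ↦ ?_)
    hJa hJb hne
  have hy : 0 < y := ha.trans_lt hy.1
  gcongr

lemma besselJ_zero_of_pos (hν : 0 < ν) : besselJ ν 0 = 0 := by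
  rw [besselJ_eq_rpow_mul_besselSeries hν.le le_rfl, zero_div, zero_rpow hν.ne', zero_mul]

lemma exists_besselJ_add_one_eq_zero {a b : ℝ} (hν : 0 ≤ ν) (ha : 0 < a) (hab : a < b)
    (hJa : besselJ ν a = 0) (hJb : besselJ ν b = 0) : ∃ y ∈ Ioo a b, besselJ (ν + 1) y = 0 := by
  have hderiv : ∀ y : ℝ, 0 < y →
      HasDerivAt (fun y ↦ y ^ (-ν) * besselJ ν y) (-(y ^ (-ν) * besselJ (ν + 1) y)) y := by
    intro y hy
    refine ((hasDerivAt_rpow_const (Or.inl hy.ne')).mul (hasDerivAt_besselJ hν hy)).congr_deriv ?_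
    rw [rpow_sub_one hy.ne']
    ring
  obtain ⟨y, hy, hy0⟩ := exists_hasDerivAt_eq_zero hab
    (fun y hy ↦ (hderiv y (ha.trans_le hy.1)).continuousAt.continuousWithinAt)
    (by rw [hJa, hJb, mul_zero, mul_zero]) (fun y hy ↦ hderiv y (ha.trans hy.1))
  refine ⟨y, hy, (mul_eq_zero.1 (neg_eq_zero.1 hy0)).resolve_left ?_⟩
  exact (rpow_pos_of_pos (ha.trans hy.1) _).ne'

end Bessel

section Phase

variable {κ x a b : ℝ}

/-- The Debye phase `√(x² - κ²) - κ arccos(κ/x)`, meaningful for `κ < x`: there `J_κ(x)`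
oscillates approximately like `cos (besselPhase κ x - π / 4)`. -/
noncomputable def besselPhase (κ x : ℝ) : ℝ := √(x ^ 2 - κ ^ 2) - κ * arccos (κ / x)

lemma sq_sub_sq_pos (hκ : 0 ≤ κ) (hx : κ < x) : 0 < x ^ 2 - κ ^ 2 := by nlinarith

lemma hasDerivAt_sqrt_sq_sub_sq (hκ : 0 ≤ κ) (hx : κ < x) :
    HasDerivAt (fun y ↦ √(y ^ 2 - κ ^ 2)) (x / √(x ^ 2 - κ ^ 2)) x := by
  have h := ((hasDerivAt_pow 2 x).sub_const (κ ^ 2)).sqrt (sq_sub_sq_pos hκ hx).ne'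
  refine h.congr_deriv ?_
  norm_num
  field_simp

lemma hasDerivAt_besselPhase (hκ : 0 ≤ κ) (hx : κ < x) :
    HasDerivAt (besselPhase κ) (√(x ^ 2 - κ ^ 2) / x) x := by
  have hx0 : 0 < x := hκ.trans_lt hx
  have hS := sq_sub_sq_pos hκ hx
  have hdiv : HasDerivAt (fun y : ℝ ↦ κ / y) (-κ / x ^ 2) x :=
    ((hasDerivAt_const x κ).div (hasDerivAt_id x) hx0.ne').congr_deriv (by simp)
  have harccos := (hasDerivAt_arccos (x := κ / x)
    (by linarith [div_nonneg hκ hx0.le]) ((div_lt_one hx0).2 hx).ne).comp x hdiv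
  have hsqrt : √(1 - (κ / x) ^ 2) = √(x ^ 2 - κ ^ 2) / x := by
    rw [show 1 - (κ / x) ^ 2 = (x ^ 2 - κ ^ 2) / x ^ 2 by field_simp, sqrt_div hS.le,
      sqrt_sq hx0.le]
  refine ((hasDerivAt_sqrt_sq_sub_sq hκ hx).sub (harccos.const_mul κ)).congr_deriv ?_
  have : 0 < √(x ^ 2 - κ ^ 2) := sqrt_pos.2 hS
  rw [hsqrt]
  field_simp
  rw [sq_sqrt hS.le]

lemma strictMonoOn_besselPhase (hκ : 0 ≤ κ) : StrictMonoOn (besselPhase κ) (Ioi κ) :=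
  strictMonoOn_of_hasDerivWithinAt_pos (f' := fun y ↦ √(y ^ 2 - κ ^ 2) / y) (convex_Ioi κ)
    (fun _ hy ↦ (hasDerivAt_besselPhase hκ hy).continuousAt.continuousWithinAt)
    (fun _ hy ↦ (hasDerivAt_besselPhase hκ (interior_subset hy)).hasDerivWithinAt)
    fun _ hy ↦ div_pos (sqrt_pos.2 (sq_sub_sq_pos hκ (interior_subset hy)))
      (hκ.trans_lt (interior_subset hy))

lemma continuousOn_besselPhase (hκ : 0 ≤ κ) : ContinuousOn (besselPhase κ) (Ioi κ) :=
  fun _ hy ↦ (hasDerivAt_besselPhase hκ hy).continuousAt.continuousWithinAt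

lemma besselPhase_zero (hx : 0 ≤ x) : besselPhase 0 x = x := by simp [besselPhase, sqrt_sq hx]

lemma besselPhase_mul (hx : 0 < x) (κ t : ℝ) :
    besselPhase (x * κ) (x * t) = x * besselPhase κ t := by
  rw [besselPhase, besselPhase, mul_div_mul_left _ _ hx.ne',
    show (x * t) ^ 2 - (x * κ) ^ 2 = x ^ 2 * (t ^ 2 - κ ^ 2) by ring, sqrt_mul (sq_nonneg x),
    sqrt_sq hx.le]
  ring

lemma besselPhase_le_sqrt (hκ : 0 ≤ κ) (x : ℝ) : besselPhase κ x ≤ √(x ^ 2 - κ ^ 2) :=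
  sub_le_self _ (mul_nonneg hκ (arccos_nonneg _))

lemma tendsto_sub_sqrt_sq_sub_sq (κ : ℝ) :
    Tendsto (fun x ↦ x - √(x ^ 2 - κ ^ 2)) atTop (𝓝 0) := by
  refine tendsto_of_tendsto_of_tendsto_of_le_of_le' tendsto_const_nhds
    ((tendsto_const_nhds (x := κ ^ 2)).div_atTop tendsto_id) ?_ ?_
  · filter_upwards [eventually_ge_atTop 0] with x hx
    exact sub_nonneg.2 (sqrt_le_iff.2 ⟨hx, by nlinarith [sq_nonneg κ]⟩)
  · filter_upwards [eventually_gt_atTop |κ|] with x hx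
    have hx0 : 0 < x := (abs_nonneg κ).trans_lt hx
    have hκx : 0 ≤ x ^ 2 - κ ^ 2 := by nlinarith [sq_abs κ, abs_nonneg κ]
    have hsq := sq_sqrt hκx
    rw [id, le_div_iff₀ hx0]
    nlinarith [sqrt_nonneg (x ^ 2 - κ ^ 2), mul_nonneg hx0.le (sqrt_nonneg (x ^ 2 - κ ^ 2)),
      sqrt_le_iff.2 ⟨hx0.le, show x ^ 2 - κ ^ 2 ≤ x ^ 2 by nlinarith [sq_nonneg κ]⟩]

lemma tendsto_sub_besselPhase (κ : ℝ) :
    Tendsto (fun x ↦ x - besselPhase κ x) atTop (𝓝 (κ * (π / 2))) := by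
  have harccos : Tendsto (fun x : ℝ ↦ arccos (κ / x)) atTop (𝓝 (π / 2)) :=
    (continuous_arccos.tendsto' 0 _ arccos_zero).comp (tendsto_const_nhds.div_atTop tendsto_id)
  simpa [besselPhase, sub_sub_eq_add_sub, add_sub_right_comm] using
    (tendsto_sub_sqrt_sq_sub_sq κ).add (harccos.const_mul κ)

lemma tendsto_besselPhase_atTop (κ : ℝ) : Tendsto (besselPhase κ) atTop atTop := by
  simpa using tendsto_id.atTop_add (tendsto_sub_besselPhase κ).neg

/-- The Liouville–Green comparison function `(x² - κ²)^(-1/4) sin (ω (θ_κ(x) - c))`. -/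
noncomputable def wkb (κ ω c x : ℝ) : ℝ :=
  (x ^ 2 - κ ^ 2) ^ (-1 / 4 : ℝ) * sin (ω * (besselPhase κ x - c))

/-- `x` times the derivative of `wkb κ ω c`. -/
noncomputable def wkbXDeriv (κ ω c x : ℝ) : ℝ :=
  (x ^ 2 - κ ^ 2) ^ (-1 / 4 : ℝ) *
    (ω * √(x ^ 2 - κ ^ 2) * cos (ω * (besselPhase κ x - c))
      - x ^ 2 / (2 * (x ^ 2 - κ ^ 2)) * sin (ω * (besselPhase κ x - c)))

/-- The potential `Q` for which `wkb κ ω c` solves `(x w')' = -Q w`. -/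
noncomputable def wkbPotential (κ ω x : ℝ) : ℝ :=
  ω ^ 2 * (x ^ 2 - κ ^ 2) / x - x * (x ^ 2 + 4 * κ ^ 2) / (4 * (x ^ 2 - κ ^ 2) ^ 2)

lemma hasDerivAt_rpow_sq_sub_sq (hκ : 0 ≤ κ) (hx : κ < x) :
    HasDerivAt (fun y ↦ (y ^ 2 - κ ^ 2) ^ (-1 / 4 : ℝ))
      (-(x / (2 * (x ^ 2 - κ ^ 2))) * (x ^ 2 - κ ^ 2) ^ (-1 / 4 : ℝ)) x := by
  have hS := sq_sub_sq_pos hκ hx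
  refine (((hasDerivAt_pow 2 x).sub_const (κ ^ 2)).rpow_const (Or.inl hS.ne')).congr_deriv ?_
  rw [rpow_sub_one hS.ne']
  norm_num
  field_simp
  ring

lemma hasDerivAt_wkb (hκ : 0 ≤ κ) (ω c : ℝ) (hx : κ < x) :
    HasDerivAt (wkb κ ω c) (wkbXDeriv κ ω c x / x) x := by
  have hx0 : 0 < x := hκ.trans_lt hx
  have hS := sq_sub_sq_pos hκ hx
  have harg := ((hasDerivAt_besselPhase hκ hx).sub_const c).const_mul ω
  refine ((hasDerivAt_rpow_sq_sub_sq hκ hx).mul harg.sin).congr_deriv ?_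
  rw [wkbXDeriv]
  field_simp
  ring

lemma hasDerivAt_wkbXDeriv (hκ : 0 ≤ κ) (ω c : ℝ) (hx : κ < x) :
    HasDerivAt (wkbXDeriv κ ω c) (-(wkbPotential κ ω x * wkb κ ω c x)) x := by
  have hx0 : 0 < x := hκ.trans_lt hx
  have hS := sq_sub_sq_pos hκ hx
  have harg := ((hasDerivAt_besselPhase hκ hx).sub_const c).const_mul ω
  have hsq := (hasDerivAt_pow 2 x).sub_const (κ ^ 2)
  have hcoeff := (hasDerivAt_pow 2 x).div (hsq.const_mul 2) (mul_pos two_pos hS).ne'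
  have hs : 0 < √(x ^ 2 - κ ^ 2) := sqrt_pos.2 hS
  refine ((hasDerivAt_rpow_sq_sub_sq hκ hx).mul ((((hasDerivAt_sqrt_sq_sub_sq hκ hx).const_mul
    ω).mul harg.cos).sub (hcoeff.mul harg.sin))).congr_deriv ?_
  have hSs : x ^ 2 - κ ^ 2 = √(x ^ 2 - κ ^ 2) ^ 2 := (sq_sqrt hS.le).symm
  have hκs : κ ^ 2 = x ^ 2 - √(x ^ 2 - κ ^ 2) ^ 2 := by rw [← hSs]; ring
  simp only [wkbPotential, wkb, Pi.mul_apply, Pi.sub_apply, Pi.div_apply]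
  generalize (x ^ 2 - κ ^ 2) ^ (-1 / 4 : ℝ) = A
  generalize √(x ^ 2 - κ ^ 2) = s at *
  rw [hSs, hκs]
  norm_num
  field_simp
  ring

lemma isSturmLiouvilleSolution_wkb (hκ : 0 ≤ κ) (ω c : ℝ) (ha : κ < a) :
    IsSturmLiouvilleSolution id (wkbPotential κ ω) (wkb κ ω c) (wkbXDeriv κ ω c) a b where
  continuousOn _ hx :=
    (hasDerivAt_wkb hκ ω c (ha.trans_le hx.1)).continuousAt.continuousWithinAt
  continuousOn_flux _ hx :=
    (hasDerivAt_wkbXDeriv hκ ω c (ha.trans_le hx.1)).continuousAt.continuousWithinAt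
  hasDerivAt _ hx := hasDerivAt_wkb hκ ω c (ha.trans hx.1)
  hasDerivAt_flux _ hx := hasDerivAt_wkbXDeriv hκ ω c (ha.trans hx.1)

lemma wkb_pos (hκ : 0 ≤ κ) {ω : ℝ} (hω : 0 < ω) (ha : κ < a)
    (hgap : ω * (besselPhase κ b - besselPhase κ a) ≤ π) (hx : x ∈ Ioo a b) :
    0 < wkb κ ω (besselPhase κ a) x := by
  have hκx : κ < x := ha.trans hx.1
  have hmono := strictMonoOn_besselPhase hκ
  have hax : besselPhase κ a < besselPhase κ x := hmono ha hκx hx.1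
  have hxb : besselPhase κ x < besselPhase κ b := hmono hκx (hκx.trans hx.2) hx.2
  refine mul_pos (rpow_pos_of_pos (sq_sub_sq_pos hκ hκx) _) (sin_pos_of_pos_of_lt_pi
    (mul_pos hω (sub_pos.2 hax)) (lt_of_lt_of_le ?_ hgap))
  gcongr

lemma wkbPotential_one_lt (hκ : 0 ≤ κ) (hx : κ < x) : wkbPotential κ 1 x < x - κ ^ 2 / x := by
  have hx0 : 0 < x := hκ.trans_lt hx
  have hS := sq_sub_sq_pos hκ hx
  have hpos : 0 < x * (x ^ 2 + 4 * κ ^ 2) / (4 * (x ^ 2 - κ ^ 2) ^ 2) := by positivity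
  have hq : x - κ ^ 2 / x = 1 ^ 2 * (x ^ 2 - κ ^ 2) / x := by field_simp
  rw [wkbPotential, hq]
  exact sub_lt_self _ hpos

lemma exists_besselJ_eq_zero_of_pi_le {ν : ℝ} (hν : 0 ≤ ν) (ha : ν < a) (hab : a < b)
    (hgap : π ≤ besselPhase ν b - besselPhase ν a) : ∃ y ∈ Ioo a b, besselJ ν y = 0 := by
  obtain ⟨c, ⟨hac, hcb⟩, hc⟩ : besselPhase ν a + π ∈ besselPhase ν '' Icc a b :=
    intermediate_value_Icc hab.le
      ((continuousOn_besselPhase hν).mono fun y hy ↦ ha.trans_le hy.1)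
      ⟨by linarith [pi_pos], by linarith⟩
  replace hac : a < c := hac.lt_of_ne fun h ↦ by rw [← h] at hc; linarith [pi_pos]
  have hgap : besselPhase ν c - besselPhase ν a = π := by linarith
  obtain ⟨y, hy, hy0⟩ := (isSturmLiouvilleSolution_wkb hν 1 (besselPhase ν a) ha).exists_zero_of_lt
    (isSturmLiouvilleSolution_besselJ hν (hν.trans ha.le)) hac
    (fun y hy ↦ (hν.trans_lt ha).trans hy.1) (fun y hy ↦ wkbPotential_one_lt hν (ha.trans hy.1))
    (by rw [wkb, sub_self, mul_zero, sin_zero, mul_zero])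
    (by rw [wkb, one_mul, hgap, sin_pi, mul_zero])
    fun y hy ↦ (wkb_pos hν one_pos ha (by rw [one_mul, hgap]) hy).ne'
  exact ⟨y, ⟨hy.1, hy.2.trans_le hcb⟩, hy0⟩

lemma pi_lt_of_lt_wkbPotential {ν ω : ℝ} (hν : 0 ≤ ν) (hκ : 0 ≤ κ) (hω : 0 < ω) (ha : κ < a)
    (hab : a < b) (hJa : besselJ ν a = 0) (hJb : besselJ ν b = 0)
    (hne : ∀ y ∈ Ioo a b, besselJ ν y ≠ 0)
    (hlt : ∀ y ∈ Ioo a b, y - ν ^ 2 / y < wkbPotential κ ω y) :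
    π < ω * (besselPhase κ b - besselPhase κ a) := by
  by_contra! hgap
  obtain ⟨y, hy, hy0⟩ := (isSturmLiouvilleSolution_besselJ hν (hκ.trans ha.le)).exists_zero_of_lt
    (isSturmLiouvilleSolution_wkb hκ ω (besselPhase κ a) ha) hab
    (fun y hy ↦ (hκ.trans_lt ha).trans hy.1) hlt hJa hJb hne
  exact (wkb_pos hκ hω ha hgap hy).ne' hy0

end Phase

section Zeros

lemma exists_strictMono_range_eq {S : Set ℝ} (hfin : ∀ t, (S ∩ Iic t).Finite)
    (hunb : ¬ BddAbove S) : ∃ a : ℕ → ℝ, StrictMono a ∧ range a = S := by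
  have hlt : ∀ t, ∃ s ∈ S, t < s := not_bddAbove_iff.1 hunb
  have hne : S.Nonempty := let ⟨s, hs, _⟩ := hlt 0; ⟨s, hs⟩
  have : LocallyFiniteOrder S := LocallyFiniteOrder.ofFiniteIcc fun s t ↦
    Finite.of_finite_image ((hfin t).subset (by
      rintro _ ⟨r, hr, rfl⟩; exact ⟨r.2, hr.2⟩)) Subtype.val_injective.injOn
  have : NoMaxOrder S := ⟨fun s ↦ let ⟨t, ht, hst⟩ := hlt s; ⟨⟨t, ht⟩, hst⟩⟩
  obtain ⟨s₀, hs₀⟩ := hne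
  obtain ⟨m, hm⟩ := (hfin s₀).exists_minimal ⟨s₀, hs₀, self_mem_Iic⟩
  let : OrderBot S :=
    { bot := ⟨m, hm.1.1⟩
      bot_le := fun s ↦ by
        by_contra! h
        have hsm : (s : ℝ) < m := h
        exact hsm.not_ge (hm.2 ⟨s.2, hsm.le.trans hm.1.2⟩ hsm.le) }
  let := LinearLocallyFiniteOrder.succOrder S
  let := LinearLocallyFiniteOrder.predOrder S
  let e : S ≃o ℕ := orderIsoNatOfLinearSuccPredArch
  refine ⟨fun n ↦ e.symm n, fun i j hij ↦ e.symm.strictMono hij, ?_⟩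
  exact (e.symm.surjective.range_comp Subtype.val).trans Subtype.range_coe

lemma lt_of_interlacing {a b : ℕ → ℝ} (ha : StrictMono a) (h0 : ∃ i, a i < b 0)
    (h : ∀ n, ∃ i, b n < a i ∧ a i < b (n + 1)) (n : ℕ) : a n < b n := by
  suffices ∃ i, n ≤ i ∧ a i < b n from
    let ⟨i, hni, hi⟩ := this; (ha.monotone hni).trans_lt hi
  induction n with
  | zero => exact let ⟨i, hi⟩ := h0; ⟨i, i.zero_le, hi⟩
  | succ n ih =>
    obtain ⟨i, hni, hi⟩ := ih
    obtain ⟨j, hj, hj'⟩ := h n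
    exact ⟨j, hni.trans_lt (ha.lt_iff_lt.1 (hi.trans hj)), hj'⟩

variable {ν : ℝ}

lemma finite_besselJ_zeros (hν : 0 ≤ ν) (X : ℝ) :
    ({t | 0 < t ∧ besselJ ν t = 0} ∩ Iic X).Finite := by
  by_contra hinf
  obtain ⟨δ, hδ : 0 < δ, hδJ⟩ := mem_nhdsGT_iff_exists_Ioo_subset.1 (eventually_besselJ_pos hν)
  have hsub : {t | 0 < t ∧ besselJ ν t = 0} ∩ Iic X ⊆ Icc δ X := by
    rintro t ⟨⟨ht, hJt⟩, htX⟩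
    refine ⟨?_, htX⟩
    by_contra! htδ
    exact (show 0 < besselJ ν t from hδJ ⟨ht, htδ⟩).ne' hJt
  obtain ⟨c, hc, hacc⟩ := Set.Infinite.exists_accPt_of_subset_isCompact hinf isCompact_Icc hsub
  have hc0 : 0 < c := hδ.trans_le hc.1
  have hfreq : ∃ᶠ t in 𝓝[≠] c, besselJ ν t = 0 :=
    (accPt_iff_frequently_nhdsNE.1 hacc).mono fun t ht ↦ ht.1.2
  have hderiv := hasDerivAt_besselJ' hν hc0
  have hJc : besselJ ν c = 0 := by
    by_contra hne
    exact hfreq ((hderiv.continuousAt.eventually_ne hne).filter_mono nhdsWithin_le_nhds)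
  exact hfreq (hderiv.eventually_ne (div_ne_zero (besselXDeriv_ne_zero hν hc0 hJc) hc0.ne'))

lemma not_bddAbove_besselJ_zeros (hν : 0 ≤ ν) : ¬ BddAbove {t | 0 < t ∧ besselJ ν t = 0} := by
  rw [not_bddAbove_iff]
  intro X
  set a := max X ν + 1
  have hXa : X < a := (le_max_left X ν).trans_lt (lt_add_one _)
  have hνa : ν < a := (le_max_right X ν).trans_lt (lt_add_one _)
  obtain ⟨b, hgap, hab⟩ := (((tendsto_besselPhase_atTop ν).eventually_ge_atTop
    (π + besselPhase ν a)).and (eventually_gt_atTop a)).exists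
  obtain ⟨y, hy, hJy⟩ := exists_besselJ_eq_zero_of_pi_le hν hνa hab (by linarith)
  exact ⟨y, ⟨(hν.trans_lt hνa).trans hy.1, hJy⟩, hXa.trans hy.1⟩

/-- The increasing enumeration of the positive zeros of `J_ν`, indexed from `0`:
`besselZero ν n = j_{ν, n + 1}`. -/
noncomputable def besselZero (ν : ℝ) : ℕ → ℝ :=
  Classical.epsilon fun a ↦ StrictMono a ∧ range a = {t | 0 < t ∧ besselJ ν t = 0}

lemma besselZero_spec (hν : 0 ≤ ν) :
    StrictMono (besselZero ν) ∧ range (besselZero ν) = {t | 0 < t ∧ besselJ ν t = 0} :=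
  Classical.epsilon_spec
    (exists_strictMono_range_eq (finite_besselJ_zeros hν) (not_bddAbove_besselJ_zeros hν))

lemma strictMono_besselZero (hν : 0 ≤ ν) : StrictMono (besselZero ν) := (besselZero_spec hν).1

lemma exists_besselZero_eq (hν : 0 ≤ ν) {t : ℝ} (ht : 0 < t) (hJ : besselJ ν t = 0) :
    ∃ n, besselZero ν n = t := by
  rw [← mem_range, (besselZero_spec hν).2]
  exact ⟨ht, hJ⟩

lemma besselZero_pos_and_eq_zero (hν : 0 ≤ ν) (n : ℕ) :
    0 < besselZero ν n ∧ besselJ ν (besselZero ν n) = 0 :=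
  (besselZero_spec hν).2.subset (mem_range_self n)

lemma besselZero_pos (hν : 0 ≤ ν) (n : ℕ) : 0 < besselZero ν n :=
  (besselZero_pos_and_eq_zero hν n).1

lemma besselJ_besselZero (hν : 0 ≤ ν) (n : ℕ) : besselJ ν (besselZero ν n) = 0 :=
  (besselZero_pos_and_eq_zero hν n).2

lemma lt_besselZero (hν : 0 ≤ ν) (n : ℕ) : ν < besselZero ν n :=
  lt_of_besselJ_eq_zero hν (besselZero_pos hν n) (besselJ_besselZero hν n)

lemma besselJ_ne_zero_of_lt_besselZero (hν : 0 ≤ ν) {t : ℝ} (ht : t ∈ Ioo 0 (besselZero ν 0)) :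
    besselJ ν t ≠ 0 := by
  intro hJ
  obtain ⟨n, rfl⟩ := exists_besselZero_eq hν ht.1 hJ
  exact n.not_lt_zero ((strictMono_besselZero hν).lt_iff_lt.1 ht.2)

lemma besselJ_ne_zero_of_mem_Ioo (hν : 0 ≤ ν) {n : ℕ} {t : ℝ}
    (ht : t ∈ Ioo (besselZero ν n) (besselZero ν (n + 1))) : besselJ ν t ≠ 0 := by
  intro hJ
  obtain ⟨m, rfl⟩ := exists_besselZero_eq hν ((besselZero_pos hν n).trans ht.1) hJ
  have hnm := (strictMono_besselZero hν).lt_iff_lt.1 ht.1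
  have hmn := (strictMono_besselZero hν).lt_iff_lt.1 ht.2
  omega

lemma eq_besselZero_of_isKthBesselZero (hν : 0 ≤ ν) {k : ℕ} {j : ℝ}
    (hj : IsKthBesselZero ν k j) : j = besselZero ν (k - 1) := by
  obtain ⟨hj0, hJ, hcard⟩ := hj
  obtain ⟨i, rfl⟩ := exists_besselZero_eq hν hj0 hJ
  have hmono := strictMono_besselZero hν
  have hset : {t : ℝ | t ∈ Ioo 0 (besselZero ν i) ∧ besselJ ν t = 0}
      = besselZero ν '' (Finset.range i : Set ℕ) := by
    ext t
    constructor
    · rintro ⟨ht, hJt⟩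
      obtain ⟨l, rfl⟩ := exists_besselZero_eq hν ht.1 hJt
      exact ⟨l, by simpa using hmono.lt_iff_lt.1 ht.2, rfl⟩
    · rintro ⟨l, hl, rfl⟩
      exact ⟨⟨besselZero_pos hν l, hmono (by simpa using hl)⟩, besselJ_besselZero hν l⟩
  rw [hset, hmono.injective.encard_image, Set.encard_coe_eq_coe_finsetCard,
    Finset.card_range] at hcard
  rw [show i = k - 1 by exact_mod_cast hcard]

lemma besselZero_lt_besselZero {μ : ℝ} (hμ : 0 ≤ μ) (hμν : μ < ν) (n : ℕ) :
    besselZero μ n < besselZero ν n := by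
  have hν : 0 < ν := hμ.trans_lt hμν
  refine lt_of_interlacing (strictMono_besselZero hμ) ?_ (fun n ↦ ?_) n
  · obtain ⟨y, hy, hJy⟩ := exists_besselJ_eq_zero_of_lt hμ hμν le_rfl (besselZero_pos hν.le 0)
      (besselJ_zero_of_pos hν) (besselJ_besselZero hν.le 0)
      fun t ht ↦ besselJ_ne_zero_of_lt_besselZero hν.le ht
    obtain ⟨i, rfl⟩ := exists_besselZero_eq hμ hy.1 hJy
    exact ⟨i, hy.2⟩
  · have hn := besselZero_pos hν.le n
    obtain ⟨y, hy, hJy⟩ := exists_besselJ_eq_zero_of_lt hμ hμν hn.le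
      (strictMono_besselZero hν.le n.lt_succ_self) (besselJ_besselZero hν.le n)
      (besselJ_besselZero hν.le (n + 1)) fun t ht ↦ besselJ_ne_zero_of_mem_Ioo hν.le ht
    obtain ⟨i, rfl⟩ := exists_besselZero_eq hμ (hn.trans hy.1) hJy
    exact ⟨i, hy⟩

lemma besselZero_add_one_lt (hν : 0 ≤ ν) (n : ℕ) :
    besselZero (ν + 1) n < besselZero ν (n + 1) := by
  have hinter : ∀ n, ∃ i, besselZero ν n < besselZero (ν + 1) i ∧
      besselZero (ν + 1) i < besselZero ν (n + 1) := by
    intro n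
    obtain ⟨y, hy, hJy⟩ := exists_besselJ_add_one_eq_zero hν (besselZero_pos hν n)
      (strictMono_besselZero hν n.lt_succ_self) (besselJ_besselZero hν n)
      (besselJ_besselZero hν (n + 1))
    obtain ⟨i, rfl⟩ := exists_besselZero_eq (by positivity) ((besselZero_pos hν n).trans hy.1) hJy
    exact ⟨i, hy⟩
  exact lt_of_interlacing (b := fun n ↦ besselZero ν (n + 1))
    (strictMono_besselZero (by positivity)) ((hinter 0).imp fun _ h ↦ h.2)
    (fun n ↦ hinter (n + 1)) n

lemma antitone_besselPhase_besselZero (hν : 0 ≤ ν) :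
    Antitone fun n : ℕ ↦ besselPhase ν (besselZero ν n) - (n + 1) * π := by
  refine antitone_nat_of_succ_le fun n ↦ ?_
  by_contra! h
  push_cast at h
  obtain ⟨y, hy, hJy⟩ := exists_besselJ_eq_zero_of_pi_le hν (lt_besselZero hν n)
    (strictMono_besselZero hν n.lt_succ_self) (by linarith)
  exact besselJ_ne_zero_of_mem_Ioo hν hy hJy

lemma monotone_besselZero_sub (hν : 1 / 2 < ν) :
    Monotone fun n : ℕ ↦ besselZero ν n - (n + 1) * π := by
  have hν0 : 0 ≤ ν := by linarith
  refine monotone_nat_of_le_succ fun n ↦ ?_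
  have hn := besselZero_pos hν0 n
  have hlt := strictMono_besselZero hν0 n.lt_succ_self
  have hgap := pi_lt_of_lt_wkbPotential hν0 le_rfl one_pos hn hlt (besselJ_besselZero hν0 n)
    (besselJ_besselZero hν0 (n + 1)) (fun t ht ↦ besselJ_ne_zero_of_mem_Ioo hν0 ht) fun y hy ↦ ?_
  · rw [besselPhase_zero hn.le, besselPhase_zero (hn.trans hlt).le] at hgap
    push_cast
    linarith
  · have hy0 : 0 < y := hn.trans hy.1
    have hQ : wkbPotential 0 1 y = y - (1 / 4) / y := by rw [wkbPotential]; field_simp; ring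
    rw [hQ]
    gcongr
    nlinarith

lemma tendsto_besselZero_atTop (hν : 1 / 2 < ν) : Tendsto (besselZero ν) atTop atTop := by
  refine tendsto_atTop_mono (fun n ↦ ?_) (tendsto_atTop_add_const_left _ (besselZero ν 0)
    (tendsto_natCast_atTop_atTop.atTop_mul_const pi_pos))
  have h := monotone_besselZero_sub hν n.zero_le
  simp only [CharP.cast_eq_zero, zero_add, one_mul] at h
  linarith

lemma exists_tendsto_besselZero_sub (hν : 1 / 2 < ν) :
    ∃ L, Tendsto (fun n : ℕ ↦ besselZero ν n - (n + 1) * π) atTop (𝓝 L) := by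
  obtain ⟨C, hC⟩ := ((tendsto_sub_besselPhase ν).comp (tendsto_besselZero_atTop hν)).bddAbove_range
  refine ⟨_, tendsto_atTop_ciSup (monotone_besselZero_sub hν)
    ⟨C + (besselPhase ν (besselZero ν 0) - π), ?_⟩⟩
  rintro _ ⟨n, rfl⟩
  have hbdd := hC ⟨n, rfl⟩
  have hanti := antitone_besselPhase_besselZero (by linarith : 0 ≤ ν) n.zero_le
  simp only [Function.comp_apply, CharP.cast_eq_zero, zero_add, one_mul] at hbdd hanti
  linarith

end Zeros

section OneHalf

lemma factorial_mul_Gamma_add_three_halves (m : ℕ) :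
    m.factorial * Real.Gamma (m + 1 / 2 + 1) = (2 * m + 1).factorial / 2 ^ (2 * m + 1) * √π := by
  have hdup := Real.Gamma_mul_Gamma_add_half (m + 1)
  rw [Real.Gamma_nat_eq_factorial, show 2 * ((m : ℝ) + 1) = ((2 * m + 1 : ℕ) : ℝ) + 1 by
    push_cast; ring, Real.Gamma_nat_eq_factorial, show (1 : ℝ) - (((2 * m + 1 : ℕ) : ℝ) + 1)
    = -((2 * m + 1 : ℕ) : ℝ) by ring, Real.rpow_neg two_pos.le, Real.rpow_natCast] at hdup
  rw [add_right_comm, hdup, div_eq_mul_inv]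

lemma besselJ_one_half {x : ℝ} (hx : 0 < x) : besselJ (1 / 2) x = √(2 / (π * x)) * sin x := by
  rw [besselJ, ← (Real.hasSum_sin x).tsum_eq, ← tsum_mul_left]
  refine tsum_congr fun m ↦ ?_
  have hpow : (x / 2) ^ (2 * (m : ℝ) + 1 / 2) = (x / 2) ^ (2 * m) * √(x / 2) := by
    rw [Real.rpow_add (by positivity), ← Real.sqrt_eq_rpow]
    exact_mod_cast rfl
  have hsqrt : √(x / 2) = x / 2 * √π * √(2 / (π * x)) := by
    rw [Real.sqrt_eq_iff_mul_self_eq (by positivity) (by positivity)]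
    calc x / 2 = x ^ 2 / 4 * π * (2 / (π * x)) := by field_simp; norm_num
      _ = x ^ 2 / 4 * √π ^ 2 * √(2 / (π * x)) ^ 2 := by
        rw [Real.sq_sqrt pi_pos.le, Real.sq_sqrt (by positivity)]
      _ = x / 2 * √π * √(2 / (π * x)) * (x / 2 * √π * √(2 / (π * x))) := by ring
  have hπ : √π ≠ 0 := by positivity
  rw [factorial_mul_Gamma_add_three_halves, hpow, hsqrt, div_pow]
  field_simp
  ring

lemma besselZero_one_half : besselZero (1 / 2) = fun n : ℕ ↦ (n + 1) * π := by
  have hν : (0 : ℝ) ≤ 1 / 2 := by norm_num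
  have hmono : StrictMono fun n : ℕ ↦ ((n : ℝ) + 1) * π := fun i j hij ↦
    mul_lt_mul_of_pos_right (by gcongr) pi_pos
  refine (StrictMono.range_inj (strictMono_besselZero hν) hmono).1 ?_
  rw [(besselZero_spec hν).2]
  ext t
  constructor
  · rintro ⟨ht, hJ⟩
    have hsin : sin t = 0 := by
      rw [besselJ_one_half ht] at hJ
      exact (mul_eq_zero.1 hJ).resolve_left (by positivity)
    obtain ⟨k, rfl⟩ := Real.sin_eq_zero_iff.1 hsin
    have hk : 0 < k := by exact_mod_cast pos_of_mul_pos_left ht pi_pos.le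
    obtain ⟨n, rfl⟩ : ∃ n : ℕ, k = n + 1 := ⟨(k - 1).toNat, by omega⟩
    exact ⟨n, by push_cast; ring⟩
  · rintro ⟨n, rfl⟩
    have hn : (0 : ℝ) < (n + 1) * π := by positivity
    refine ⟨hn, ?_⟩
    rw [besselJ_one_half hn, show ((n : ℝ) + 1) * π = (n + 1 : ℕ) * π by push_cast; ring,
      Real.sin_nat_mul_pi, mul_zero]

end OneHalf

section Laplace

variable {E : Type*} [NormedAddCommGroup E] [NormedSpace ℝ E] {g : ℝ → E} {x : ℝ}

/-- The Laplace integral `∫₀^∞ e^{-xs} g(s) ds` converges absolutely for every `x > 0`. -/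
def LaplaceIntegrable (g : ℝ → E) : Prop :=
  ∀ x, 0 < x → IntegrableOn (fun s ↦ rexp (-(x * s)) • g s) (Ioi 0)

/-- The Laplace transform `x ↦ ∫₀^∞ e^{-xs} g(s) ds`. -/
noncomputable def laplaceTransform (g : ℝ → E) (x : ℝ) : E :=
  ∫ s in Ioi 0, rexp (-(x * s)) • g s

lemma mul_exp_neg_le {y s : ℝ} (hx : 0 < x) (hs : 0 < s) (hy : x ≤ y) :
    s * rexp (-(y * s)) ≤ 2 / x * rexp (-(x / 2 * s)) := by
  have hs' : s ≤ 2 / x * rexp (x / 2 * s) := by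
    rw [← div_le_iff₀' (by positivity), div_div_eq_mul_div, mul_comm s, mul_div_right_comm]
    linarith [Real.add_one_le_exp (x / 2 * s)]
  calc s * rexp (-(y * s)) ≤ 2 / x * rexp (x / 2 * s) * rexp (-(x * s)) := by gcongr
    _ = 2 / x * rexp (-(x / 2 * s)) := by rw [mul_assoc, ← Real.exp_add]; ring_nf

lemma norm_exp_smul_smul_le {y s : ℝ} (hx : 0 < x) (hs : 0 < s) (hy : x ≤ y) (v : E) :
    ‖rexp (-(y * s)) • s • v‖ ≤ 2 / x * ‖rexp (-(x / 2 * s)) • v‖ := by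
  rw [smul_smul, mul_comm, norm_smul, norm_smul, Real.norm_of_nonneg (by positivity),
    Real.norm_of_nonneg (by positivity), ← mul_assoc]
  exact mul_le_mul_of_nonneg_right (mul_exp_neg_le hx hs hy) (norm_nonneg v)

lemma LaplaceIntegrable.aestronglyMeasurable (hg : LaplaceIntegrable g) :
    AEStronglyMeasurable g (volume.restrict (Ioi 0)) := by
  have hexp : AEStronglyMeasurable (fun s : ℝ ↦ rexp (1 * s)) (volume.restrict (Ioi 0)) :=
    (by fun_prop : Continuous fun s : ℝ ↦ rexp (1 * s)).aestronglyMeasurable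
  refine (hexp.smul (hg 1 one_pos).aestronglyMeasurable).congr (Eventually.of_forall fun s ↦ ?_)
  simp only [Pi.smul_apply', smul_smul, ← Real.exp_add, add_neg_cancel, Real.exp_zero, one_smul]

lemma LaplaceIntegrable.id_smul (hg : LaplaceIntegrable g) :
    LaplaceIntegrable fun s ↦ s • g s := by
  intro x hx
  refine ((hg (x / 2) (by positivity)).norm.const_mul (2 / x)).mono' ?_ ?_
  · exact (by fun_prop : Continuous fun s : ℝ ↦ rexp (-(x * s))).aestronglyMeasurable.smul
      (continuous_id.aestronglyMeasurable.smul hg.aestronglyMeasurable)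
  · exact (ae_restrict_iff' measurableSet_Ioi).2
      (Eventually.of_forall fun s hs ↦ norm_exp_smul_smul_le hx hs le_rfl _)

lemma LaplaceIntegrable.pow_smul (hg : LaplaceIntegrable g) (k : ℕ) :
    LaplaceIntegrable fun s ↦ s ^ k • g s := by
  induction k with
  | zero => simpa only [pow_zero, one_smul] using hg
  | succ k ih => simpa only [pow_succ', mul_smul] using ih.id_smul

lemma LaplaceIntegrable.hasDerivAt (hg : LaplaceIntegrable g) (hx : 0 < x) :
    HasDerivAt (laplaceTransform g) (-laplaceTransform (fun s ↦ s • g s) x) x := by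
  have hx2 : 0 < x / 2 := by positivity
  have hder := hasDerivAt_integral_of_dominated_loc_of_deriv_le
    (μ := volume.restrict (Ioi (0 : ℝ))) (𝕜 := ℝ) (F := fun y s ↦ rexp (-(y * s)) • g s)
    (F' := fun y s ↦ -(rexp (-(y * s)) • s • g s))
    (bound := fun s ↦ 2 / (x / 2) * ‖rexp (-(x / 2 / 2 * s)) • g s‖)
    (Ioi_mem_nhds (half_lt_self hx))
    ((eventually_gt_nhds hx).mono fun y hy ↦ (hg y hy).aestronglyMeasurable) (hg x hx)
    (hg.id_smul x hx).aestronglyMeasurable.neg ?_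
    ((hg (x / 2 / 2) (by positivity)).norm.const_mul _) ?_
  · exact hder.2.congr_deriv (by rw [laplaceTransform, integral_neg])
  · refine (ae_restrict_iff' measurableSet_Ioi).2 (Eventually.of_forall fun s hs y hy ↦ ?_)
    rw [norm_neg]
    exact norm_exp_smul_smul_le hx2 hs (le_of_lt hy) _
  · refine Eventually.of_forall fun s y _ ↦ ?_
    have hexp : HasDerivAt (fun y : ℝ ↦ rexp (-(y * s))) (rexp (-(y * s)) * -(1 * s)) y :=
      ((hasDerivAt_id y).mul_const s).neg.exp
    exact (hexp.smul_const (g s)).congr_deriv (by rw [one_mul, mul_neg, neg_smul, mul_smul])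

end Laplace

section Hankel

/-- The kernel `(α s² - 2 i β s) ^ m`. For `α = β = 1` and `m = ν - 1 / 2` its Laplace transform
is, up to elementary factors, the Hankel function of order `ν`; the weights `α` and `β` interpolate
between its behaviour at infinity and at zero. -/
noncomputable def hankelKernel (m α β s : ℝ) : ℂ :=
  (α * s ^ 2 - 2 * Complex.I * (β * s) : ℂ) ^ (m : ℂ)

/-- The integral `∫₀^∞ e^{-s} (α s² - 2 i β s) ^ m ds`. -/
noncomputable def hankelIntegral (m α β : ℝ) : ℂ := laplaceTransform (hankelKernel m α β) 1

variable {m α β s x : ℝ}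

lemma continuousAt_hankelKernel (hm : 0 < m) (hα : 0 ≤ α) :
    ContinuousAt (fun p : ℝ × ℝ × ℝ ↦ hankelKernel m p.1 p.2.1 p.2.2) (α, β, s) := by
  have hre : 0 ≤ (α * s ^ 2 - 2 * Complex.I * (β * s) : ℂ).re := by
    simp only [← Complex.ofReal_pow, ← Complex.ofReal_mul, Complex.sub_re, Complex.ofReal_re,
      Complex.re_mul_ofReal]
    simp only [Complex.mul_re, Complex.I_re, Complex.I_im, Complex.re_ofNat, Complex.im_ofNat]
    have : 0 ≤ α * s ^ 2 := by positivity
    linarith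
  have hcpow := Complex.continuousAt_cpow_of_re_pos
    (p := ((α * s ^ 2 - 2 * Complex.I * (β * s) : ℂ), (m : ℂ))) (Or.inl hre) (by simpa using hm)
  exact ContinuousAt.comp (x := (α, β, s)) (f := fun p : ℝ × ℝ × ℝ ↦
    ((p.1 * p.2.2 ^ 2 - 2 * Complex.I * (p.2.1 * p.2.2) : ℂ), (m : ℂ))) hcpow (by fun_prop)

lemma continuous_hankelKernel (hm : 0 < m) (hα : 0 ≤ α) : Continuous (hankelKernel m α β) :=
  continuous_iff_continuousAt.2 fun s ↦
    (continuousAt_hankelKernel (s := s) hm hα).comp (f := fun s : ℝ ↦ (α, β, s)) (by fun_prop)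

lemma norm_hankelKernel_le (hm : 0 ≤ m) (hα : α ∈ Icc 0 1) (hβ : β ∈ Icc 0 1) (hs : 0 ≤ s) :
    ‖hankelKernel m α β s‖ ≤ (s ^ 2 + 2 * s) ^ m := by
  rw [hankelKernel, Complex.norm_cpow_real]
  refine Real.rpow_le_rpow (norm_nonneg _) ((norm_sub_le _ _).trans ?_) hm
  simp only [norm_mul, norm_pow, Complex.norm_real, Complex.norm_I, Complex.norm_ofNat, mul_one,
    Real.norm_of_nonneg hα.1, Real.norm_of_nonneg hβ.1, Real.norm_of_nonneg hs]
  exact add_le_add (mul_le_of_le_one_left (by positivity) hα.2)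
    (mul_le_mul_of_nonneg_left (mul_le_of_le_one_left hs hβ.2) two_pos.le)

lemma integrableOn_exp_mul_rpow (hm : 0 < m) (hx : 0 < x) :
    IntegrableOn (fun s : ℝ ↦ rexp (-(x * s)) * (s ^ 2 + 2 * s) ^ m) (Ioi 0) := by
  have hquad : (fun s : ℝ ↦ s ^ 2 + 2 * s) =O[atTop] fun s ↦ rexp (x / (2 * m) * s) := by
    have hd : 0 < x / (2 * m) := by positivity
    exact (isLittleO_pow_exp_pos_mul_atTop 2 hd).isBigO.add
      (by simpa using (isLittleO_pow_exp_pos_mul_atTop 1 hd).isBigO.const_mul_left 2)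
  have hrpow := hquad.rpow hm.le (Eventually.of_forall fun s ↦ (Real.exp_pos _).le)
  refine integrable_of_isBigO_exp_neg (half_pos hx) (Continuous.continuousOn ?_) ?_
  · exact (by fun_prop : Continuous fun s : ℝ ↦ rexp (-(x * s))).mul
      ((by fun_prop : Continuous fun s : ℝ ↦ s ^ 2 + 2 * s).rpow_const fun s ↦ Or.inr hm.le)
  · refine ((Asymptotics.isBigO_refl (fun s ↦ rexp (-(x * s))) atTop).mul hrpow).congr_right
      fun s ↦ ?_
    rw [← Real.exp_mul, ← Real.exp_add]
    congr 1
    field_simp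
    ring

lemma laplaceIntegrable_hankelKernel (hm : 0 < m) (hα : α ∈ Icc 0 1) (hβ : β ∈ Icc 0 1) :
    LaplaceIntegrable (hankelKernel m α β) := by
  intro x hx
  refine (integrableOn_exp_mul_rpow hm hx).mono' ?_ ?_
  · exact (by fun_prop : Continuous fun s : ℝ ↦ rexp (-(x * s))).aestronglyMeasurable.smul
      (continuous_hankelKernel hm hα.1).aestronglyMeasurable
  · refine (ae_restrict_iff' measurableSet_Ioi).2 (Eventually.of_forall fun s hs ↦ ?_)
    rw [norm_smul, Real.norm_of_nonneg (by positivity)]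
    gcongr
    exact norm_hankelKernel_le hm.le hα hβ (le_of_lt hs)

lemma continuousOn_hankelIntegral (hm : 0 < m) :
    ContinuousOn (fun p : ℝ × ℝ ↦ hankelIntegral m p.1 p.2) (Icc 0 1 ×ˢ Icc 0 1) := by
  refine continuousOn_of_dominated
    (fun p hp ↦ (laplaceIntegrable_hankelKernel hm hp.1 hp.2 1 one_pos).aestronglyMeasurable)
    (fun p hp ↦ ?_) (integrableOn_exp_mul_rpow hm one_pos) ?_
  · refine (ae_restrict_iff' measurableSet_Ioi).2 (Eventually.of_forall fun s hs ↦ ?_)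
    rw [norm_smul, Real.norm_of_nonneg (by positivity)]
    gcongr
    exact norm_hankelKernel_le hm.le hp.1 hp.2 (le_of_lt hs)
  · refine Eventually.of_forall fun s p hp ↦ ContinuousAt.continuousWithinAt ?_
    exact continuousAt_const.smul ((continuousAt_hankelKernel (s := s) hm hp.1.1).comp
      (f := fun p : ℝ × ℝ ↦ (p.1, p.2, s)) (by fun_prop))

lemma ofReal_mul_cpow {r : ℝ} (hr : 0 < r) (z : ℂ) (m : ℝ) :
    ((r : ℂ) * z) ^ (m : ℂ) = (r ^ m : ℝ) * z ^ (m : ℂ) := by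
  rcases eq_or_ne z 0 with rfl | hz
  · rcases eq_or_ne m 0 with rfl | hm
    · simp
    · simp [hm]
  · rw [Complex.cpow_def_of_ne_zero (mul_ne_zero (Complex.ofReal_ne_zero.2 hr.ne') hz),
      Complex.log_ofReal_mul hr hz, add_mul, Complex.exp_add, Complex.cpow_def_of_ne_zero hz,
      Real.rpow_def_of_pos hr]
    push_cast
    rfl

lemma hankelKernel_mul (c : ℝ) :
    hankelKernel m α β (c * s) = hankelKernel m (c ^ 2 * α) (c * β) s := by
  rw [hankelKernel, hankelKernel]
  push_cast
  ring_nf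

lemma hankelKernel_mul_mul {c : ℝ} (hc : 0 < c) :
    hankelKernel m (c * α) (c * β) s = (c ^ m : ℝ) * hankelKernel m α β s := by
  rw [hankelKernel, hankelKernel, ← ofReal_mul_cpow hc]
  push_cast
  ring_nf

lemma laplaceTransform_hankelKernel (hx : 0 < x) :
    x * laplaceTransform (hankelKernel m 1 1) x = hankelIntegral m (x⁻¹ ^ 2) x⁻¹ := by
  have hcomp := integral_comp_mul_left_Ioi
    (fun s ↦ rexp (-(x * s)) • hankelKernel m 1 1 s) 0 (inv_pos.2 hx)
  rw [mul_zero, inv_inv] at hcomp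
  rw [laplaceTransform, ← Complex.real_smul, ← hcomp, hankelIntegral, laplaceTransform]
  refine integral_congr_ae (Eventually.of_forall fun s ↦ ?_)
  simp only [hankelKernel_mul, mul_inv_cancel_left₀ hx.ne', one_mul, mul_one]

lemma hankelIntegral_mul_mul {c : ℝ} (hc : 0 < c) :
    hankelIntegral m (c * α) (c * β) = (c ^ m : ℝ) * hankelIntegral m α β := by
  simp only [hankelIntegral, laplaceTransform, hankelKernel_mul_mul hc, ← integral_const_mul,
    mul_smul_comm]

lemma hankelIntegral_one_zero (hm : 0 < m) : hankelIntegral m 1 0 = Real.Gamma (2 * m + 1) := by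
  rw [hankelIntegral, laplaceTransform, Real.Gamma_eq_integral (by positivity),
    ← integral_complex_ofReal]
  refine setIntegral_congr_fun measurableSet_Ioi fun s (hs : 0 < s) ↦ ?_
  have hkernel : hankelKernel m 1 0 s = (s ^ (2 * m) : ℝ) := by
    rw [Real.rpow_mul hs.le, Complex.ofReal_cpow (by positivity), hankelKernel]
    norm_num
  simp only [hkernel, Complex.real_smul, Complex.ofReal_mul, one_mul, add_sub_cancel_right]

lemma hankelIntegral_zero_one (hm : 0 < m) : hankelIntegral m 0 1 =
    (2 ^ m * Real.Gamma (m + 1) : ℝ) * Complex.exp ((-(m * (π / 2)) : ℝ) * Complex.I) := by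
  have hI : (-Complex.I) ^ (m : ℂ) = Complex.exp ((-(m * (π / 2)) : ℝ) * Complex.I) := by
    rw [Complex.cpow_def_of_ne_zero (by simp), Complex.log_neg_I]
    congr 1
    push_cast
    ring
  rw [hankelIntegral, laplaceTransform, Real.Gamma_eq_integral (by positivity), ← hI,
    ← integral_const_mul, ← integral_complex_ofReal, ← integral_mul_const]
  refine setIntegral_congr_fun measurableSet_Ioi fun s (hs : 0 < s) ↦ ?_
  have hkernel : hankelKernel m 0 1 s = (2 ^ m * s ^ m : ℝ) * (-Complex.I) ^ (m : ℂ) := by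
    rw [← Real.mul_rpow two_pos.le hs.le, ← ofReal_mul_cpow (by positivity), hankelKernel]
    push_cast
    ring_nf
  simp only [hkernel, Complex.real_smul, Complex.ofReal_mul, one_mul, add_sub_cancel_right]
  ring

end Hankel

section HankelEquation

variable {m s x : ℝ}

lemma sq_sub_two_I_mul_mem_slitPlane (hs : 0 < s) :
    (s ^ 2 - 2 * Complex.I * s : ℂ) ∈ Complex.slitPlane := by
  right
  simp [← Complex.ofReal_pow, hs.ne']

lemma hankelKernel_add_one (hs : 0 < s) :
    hankelKernel (m + 1) 1 1 s = (s ^ 2 - 2 * Complex.I * s) * hankelKernel m 1 1 s := by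
  have hne := Complex.slitPlane_ne_zero (sq_sub_two_I_mul_mem_slitPlane hs)
  simp only [hankelKernel, Complex.ofReal_one, one_mul]
  rw [Complex.ofReal_add, Complex.ofReal_one, Complex.cpow_add _ _ hne, Complex.cpow_one, mul_comm]

lemma hasDerivAt_hankelKernel_add_one (hs : 0 < s) :
    HasDerivAt (hankelKernel (m + 1) 1 1) (2 * (m + 1) * (s - Complex.I) * hankelKernel m 1 1 s)
      s := by
  have hquad : HasDerivAt (fun z : ℂ ↦ z ^ 2 - 2 * Complex.I * z) (2 * s - 2 * Complex.I) s := by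
    exact ((hasDerivAt_pow 2 (s : ℂ)).sub ((hasDerivAt_id (s : ℂ)).const_mul
      (2 * Complex.I))).congr_deriv (by simp)
  have hcpow := (hquad.cpow_const (c := (m + 1 : ℝ))
    (sq_sub_two_I_mul_mem_slitPlane hs)).comp_ofReal
  convert hcpow using 1
  · ext s
    simp [hankelKernel]
  · simp only [hankelKernel, Complex.ofReal_one, one_mul, Complex.ofReal_add, add_sub_cancel_right]
    ring

/-- The Laplace transform of `s ^ k (s² - 2 i s) ^ m`. -/
noncomputable def hankelMoment (m : ℝ) (k : ℕ) (x : ℝ) : ℂ :=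
  laplaceTransform (fun s ↦ s ^ k • hankelKernel m 1 1 s) x

lemma laplaceIntegrable_pow_smul_hankelKernel (hm : 0 < m) (k : ℕ) :
    LaplaceIntegrable fun s ↦ s ^ k • hankelKernel m 1 1 s :=
  (laplaceIntegrable_hankelKernel hm ⟨zero_le_one, le_rfl⟩ ⟨zero_le_one, le_rfl⟩).pow_smul k

lemma hasDerivAt_hankelMoment (hm : 0 < m) (k : ℕ) (hx : 0 < x) :
    HasDerivAt (hankelMoment m k) (-hankelMoment m (k + 1) x) x := by
  refine ((laplaceIntegrable_pow_smul_hankelKernel hm k).hasDerivAt hx).congr_deriv ?_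
  simp only [hankelMoment, pow_succ', mul_smul]

-- Integrate the derivative of `e^{-xs} (s² - 2 i s) ^ (m + 1)` over `s > 0`.
lemma hankelMoment_relation (hm : 0 < m) (hx : 0 < x) :
    x * (hankelMoment m 2 x - 2 * Complex.I * hankelMoment m 1 x) =
      2 * (m + 1) * (hankelMoment m 1 x - Complex.I * hankelMoment m 0 x) := by
  have hm1 : 0 < m + 1 := by positivity
  set F : ℕ → ℝ → ℂ := fun k s ↦ rexp (-(x * s)) • s ^ k • hankelKernel m 1 1 s with hF
  have hFint : ∀ k, IntegrableOn (F k) (Ioi 0) := fun k ↦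
    laplaceIntegrable_pow_smul_hankelKernel hm k x hx
  have hleft : IntegrableOn (fun s ↦ x * (F 2 s - 2 * Complex.I * F 1 s)) (Ioi 0) :=
    ((hFint 2).sub ((hFint 1).const_mul _)).const_mul _
  have hright : IntegrableOn (fun s ↦ 2 * (m + 1) * (F 1 s - Complex.I * F 0 s)) (Ioi 0) :=
    ((hFint 1).sub ((hFint 0).const_mul _)).const_mul _
  set f : ℝ → ℂ := fun s ↦ rexp (-(x * s)) • hankelKernel (m + 1) 1 1 s with hf
  have hderiv : ∀ s ∈ Ioi (0 : ℝ), HasDerivAt f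
      (2 * (m + 1) * (F 1 s - Complex.I * F 0 s) - x * (F 2 s - 2 * Complex.I * F 1 s)) s := by
    intro s hs
    have hexp : HasDerivAt (fun s ↦ rexp (-(x * s))) (rexp (-(x * s)) * -(x * 1)) s :=
      ((hasDerivAt_id s).const_mul x).neg.exp
    refine (hexp.smul (hasDerivAt_hankelKernel_add_one hs)).congr_deriv ?_
    simp only [hF, hankelKernel_add_one hs, Complex.real_smul]
    push_cast
    ring
  have hfint : IntegrableOn f (Ioi 0) := by
    simpa only [pow_zero, one_smul] using laplaceIntegrable_pow_smul_hankelKernel hm1 0 x hx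
  have hf0 : f 0 = 0 := by
    have : (m : ℂ) + 1 ≠ 0 := by exact_mod_cast hm1.ne'
    simp [hf, hankelKernel, this]
  have hfcont : Continuous f := (by fun_prop : Continuous fun s : ℝ ↦ rexp (-(x * s))).smul
    (continuous_hankelKernel hm1 zero_le_one)
  have key := integral_Ioi_of_hasDerivAt_of_tendsto hfcont.continuousWithinAt hderiv
    (hright.sub hleft)
    (tendsto_zero_of_hasDerivAt_of_integrableOn_Ioi hderiv (hright.sub hleft) hfint)
  rw [integral_sub hright hleft, integral_const_mul, integral_const_mul,
    integral_sub (hFint 2) ((hFint 1).const_mul _), integral_sub (hFint 1) ((hFint 0).const_mul _),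
    integral_const_mul, integral_const_mul, hf0, sub_zero, sub_eq_zero] at key
  exact key.symm

/-- The solution `x ^ ν e^{ix} ∫₀^∞ e^{-xs} (s² - 2 i s) ^ (ν - 1 / 2) ds` of Bessel's equation, a
constant multiple of the Hankel function of order `ν`. -/
noncomputable def hankelFun (ν x : ℝ) : ℂ :=
  (x ^ ν : ℝ) * Complex.exp (x * Complex.I) * hankelMoment (ν - 1 / 2) 0 x

/-- The flux `x H'(x)` of the solution `H = hankelFun ν` of Bessel's equation. -/
noncomputable def hankelXDeriv (ν x : ℝ) : ℂ :=
  (x ^ ν : ℝ) * Complex.exp (x * Complex.I) *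
    ((ν + x * Complex.I) * hankelMoment (ν - 1 / 2) 0 x - x * hankelMoment (ν - 1 / 2) 1 x)

variable {ν : ℝ}

lemma hasDerivAt_rpow_mul_cexp (hx : 0 < x) :
    HasDerivAt (fun x : ℝ ↦ (x ^ ν : ℝ) * Complex.exp (x * Complex.I))
      ((x ^ ν : ℝ) * Complex.exp (x * Complex.I) * ((ν + x * Complex.I) / x)) x := by
  have hpow := (Real.hasDerivAt_rpow_const (p := ν) (Or.inl hx.ne')).ofReal_comp
  have hexp := ((hasDerivAt_id (x : ℂ)).mul_const Complex.I).cexp.comp_ofReal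
  refine (hpow.mul hexp).congr_deriv ?_
  have hx' : (x : ℂ) ≠ 0 := by exact_mod_cast hx.ne'
  rw [Real.rpow_sub_one hx.ne']
  push_cast
  simp only [id_eq]
  field_simp

lemma hasDerivAt_hankelFun (hν : 1 / 2 < ν) (hx : 0 < x) :
    HasDerivAt (hankelFun ν) (hankelXDeriv ν x / x) x := by
  refine ((hasDerivAt_rpow_mul_cexp hx).mul
    (hasDerivAt_hankelMoment (sub_pos.2 hν) 0 hx)).congr_deriv ?_
  have hx' : (x : ℂ) ≠ 0 := by exact_mod_cast hx.ne'
  rw [hankelXDeriv]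
  field_simp
  ring

lemma hasDerivAt_hankelXDeriv (hν : 1 / 2 < ν) (hx : 0 < x) :
    HasDerivAt (hankelXDeriv ν) (-((x - ν ^ 2 / x : ℝ) * hankelFun ν x)) x := by
  have hm : 0 < ν - 1 / 2 := sub_pos.2 hν
  have hid : HasDerivAt (fun x : ℝ ↦ (x : ℂ)) 1 x := (hasDerivAt_id (x : ℂ)).comp_ofReal
  have hlin : HasDerivAt (fun x : ℝ ↦ (ν + x * Complex.I : ℂ)) (1 * Complex.I) x :=
    (hid.mul_const Complex.I).const_add _
  refine ((hasDerivAt_rpow_mul_cexp hx).mul ((hlin.mul (hasDerivAt_hankelMoment hm 0 hx)).sub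
    (hid.mul (hasDerivAt_hankelMoment hm 1 hx)))).congr_deriv ?_
  have hx' : (x : ℂ) ≠ 0 := by exact_mod_cast hx.ne'
  have hrel := hankelMoment_relation hm hx
  rw [hankelFun]
  simp only [Pi.sub_apply, Pi.mul_apply]
  generalize hankelMoment (ν - 1 / 2) 0 x = M₀ at hrel ⊢
  generalize hankelMoment (ν - 1 / 2) 1 x = M₁ at hrel ⊢
  generalize hankelMoment (ν - 1 / 2) 2 x = M₂ at hrel ⊢
  push_cast at hrel ⊢
  field_simp
  linear_combination (x ^ ν : ℝ) * x * hrel + (x ^ ν : ℝ) * x ^ 2 * M₀ * Complex.I_sq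

lemma isSturmLiouvilleSolution_hankelFun (L : ℂ →L[ℝ] ℝ) (hν : 1 / 2 < ν) {a b : ℝ} (ha : 0 < a) :
    IsSturmLiouvilleSolution id (fun x ↦ x - ν ^ 2 / x) (fun x ↦ L (hankelFun ν x))
      (fun x ↦ L (hankelXDeriv ν x)) a b := by
  have hL {f : ℝ → ℂ} {f' : ℂ} {x : ℝ} (hf : HasDerivAt f f' x) :
      HasDerivAt (fun x ↦ L (f x)) (L f') x := L.hasFDerivAt.comp_hasDerivAt x hf
  refine ⟨fun x hx ↦ ?_, fun x hx ↦ ?_, fun x hx ↦ ?_, fun x hx ↦ ?_⟩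
  · exact (hL (hasDerivAt_hankelFun hν (ha.trans_le hx.1))).continuousAt.continuousWithinAt
  · exact (hL (hasDerivAt_hankelXDeriv hν (ha.trans_le hx.1))).continuousAt.continuousWithinAt
  · refine (hL (hasDerivAt_hankelFun hν (ha.trans hx.1))).congr_deriv ?_
    rw [div_eq_inv_mul, ← Complex.ofReal_inv, ← Complex.real_smul, map_smul, smul_eq_mul, id,
      inv_mul_eq_div]
  · refine (hL (hasDerivAt_hankelXDeriv hν (ha.trans hx.1))).congr_deriv ?_
    rw [map_neg, ← Complex.real_smul, map_smul, smul_eq_mul]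

end HankelEquation

section HankelAsymptotics

variable {m ν x : ℝ}

lemma hankelMoment_zero (hx : 0 < x) :
    hankelMoment m 0 x = (x⁻¹ : ℝ) * hankelIntegral m (x⁻¹ ^ 2) x⁻¹ := by
  have hx' : (x : ℂ) ≠ 0 := by exact_mod_cast hx.ne'
  rw [← laplaceTransform_hankelKernel hx, Complex.ofReal_inv, inv_mul_cancel_left₀ hx']
  simp only [hankelMoment, pow_zero, one_smul]

lemma rpow_mul_hankelFun (hx : 0 < x) : (x ^ ν : ℝ) * hankelFun ν x =
    Complex.exp (x * Complex.I) * hankelIntegral (ν - 1 / 2) 1 x := by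
  have hscale := hankelIntegral_mul_mul (m := ν - 1 / 2) (α := 1) (β := x)
    (pow_pos (inv_pos.2 hx) 2)
  rw [mul_one, show x⁻¹ ^ 2 * x = x⁻¹ by field_simp] at hscale
  have hpow : x ^ ν * x ^ ν * (x⁻¹ * (x⁻¹ ^ 2) ^ (ν - 1 / 2)) = 1 := by
    rw [← Real.rpow_natCast, ← Real.rpow_mul (inv_pos.2 hx).le, Real.inv_rpow hx.le,
      ← Real.rpow_neg hx.le, ← Real.rpow_neg_one, ← Real.rpow_add hx, ← Real.rpow_add hx,
      ← Real.rpow_add hx]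
    convert Real.rpow_zero x using 2
    push_cast
    ring
  rw [hankelFun, hankelMoment_zero hx, hscale]
  have hpow' : ((x ^ ν * x ^ ν * (x⁻¹ * (x⁻¹ ^ 2) ^ (ν - 1 / 2)) : ℝ) : ℂ) = 1 := by
    rw [hpow, Complex.ofReal_one]
  push_cast at hpow' ⊢
  linear_combination Complex.exp (x * Complex.I) * hankelIntegral (ν - 1 / 2) 1 x * hpow'

lemma hankelFun_eq (hx : 0 < x) : hankelFun ν x =
    (x ^ (-1 / 2 : ℝ) : ℝ) * (Complex.exp (x * Complex.I) *
      hankelIntegral (ν - 1 / 2) x⁻¹ 1) := by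
  have hscale := hankelIntegral_mul_mul (m := ν - 1 / 2) (α := x⁻¹) (β := 1) (inv_pos.2 hx)
  rw [mul_one, ← sq] at hscale
  have hpow : x ^ ν * (x⁻¹ * x⁻¹ ^ (ν - 1 / 2)) = x ^ (-1 / 2 : ℝ) := by
    rw [Real.inv_rpow hx.le, ← Real.rpow_neg hx.le, ← Real.rpow_neg_one, ← Real.rpow_add hx,
      ← Real.rpow_add hx]
    ring_nf
  rw [hankelFun, hankelMoment_zero hx, hscale, ← hpow]
  push_cast
  ring

lemma tendsto_hankelIntegral_one (hm : 0 < m) :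
    Tendsto (hankelIntegral m 1) (𝓝[>] 0) (𝓝 (Real.Gamma (2 * m + 1))) := by
  rw [← hankelIntegral_one_zero hm]
  refine (continuousOn_hankelIntegral hm (1, 0) (by simp)).tendsto.comp (f := fun x ↦ (1, x)) ?_
  refine tendsto_nhdsWithin_iff.2 ⟨?_, ?_⟩
  · exact (by fun_prop : Continuous fun x : ℝ ↦ ((1 : ℝ), x)).continuousWithinAt
  · filter_upwards [Ioo_mem_nhdsGT one_pos] with x hx using by simp [hx.1.le, hx.2.le]

lemma tendsto_hankelIntegral_inv (hm : 0 < m) : Tendsto (fun x ↦ hankelIntegral m x⁻¹ 1) atTop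
    (𝓝 ((2 ^ m * Real.Gamma (m + 1) : ℝ) * Complex.exp ((-(m * (π / 2)) : ℝ) * Complex.I))) := by
  rw [← hankelIntegral_zero_one hm]
  refine (continuousOn_hankelIntegral hm (0, 1) (by simp)).tendsto.comp
    (f := fun x ↦ (x⁻¹, 1)) ?_
  refine tendsto_nhdsWithin_iff.2 ⟨tendsto_inv_atTop_zero.prodMk_nhds tendsto_const_nhds, ?_⟩
  filter_upwards [eventually_ge_atTop 1] with x hx
  have : 0 < x := by linarith
  simp [this.le, inv_le_one_of_one_le₀ hx]

lemma tendsto_rpow_mul_hankelFun (hν : 1 / 2 < ν) :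
    Tendsto (fun x ↦ (x ^ ν : ℝ) * hankelFun ν x) (𝓝[>] 0) (𝓝 (Real.Gamma (2 * ν) : ℝ)) := by
  have hexp : Tendsto (fun x : ℝ ↦ Complex.exp (x * Complex.I)) (𝓝[>] 0) (𝓝 1) := by
    have : Continuous fun x : ℝ ↦ Complex.exp (x * Complex.I) := by fun_prop
    simpa using (this.tendsto 0).mono_left nhdsWithin_le_nhds
  have hlim := hexp.mul (tendsto_hankelIntegral_one (sub_pos.2 hν))
  rw [one_mul, show 2 * (ν - 1 / 2) + 1 = 2 * ν by ring] at hlim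
  refine hlim.congr' ?_
  filter_upwards [self_mem_nhdsWithin] with x hx using (rpow_mul_hankelFun hx).symm

lemma tendsto_rpow_mul_besselJ (hν : 0 < ν) :
    Tendsto (fun x ↦ x ^ ν * besselJ ν x) (𝓝[>] 0) (𝓝 0) := by
  have hcont : ContinuousOn (fun x ↦ x ^ ν * besselJ ν x) (Ici 0) :=
    (continuousOn_id.rpow_const fun _ _ ↦ Or.inr hν.le).mul (continuousOn_besselJ hν.le)
  have hlim := (hcont 0 self_mem_Ici).tendsto.mono_left (nhdsWithin_mono 0 Ioi_subset_Ici_self)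
  simpa only [Real.zero_rpow hν.ne', zero_mul] using hlim

-- Three solutions satisfy `J W(Re H, Im H) + Re H W(Im H, J) + Im H W(J, Re H) = 0`; near zero,
-- `x ^ ν Re H` is the only one of `x ^ ν J`, `x ^ ν Re H`, `x ^ ν Im H` that does not vanish.
lemma wronskian_besselJ_im_hankelFun (hν : 1 / 2 < ν) (hx : 0 < x) :
    besselXDeriv ν x * (hankelFun ν x).im - besselJ ν x * (hankelXDeriv ν x).im = 0 := by
  have hν0 : 0 < ν := by linarith
  have hJ := fun {a b : ℝ} (ha : 0 < a) ↦
    isSturmLiouvilleSolution_besselJ (b := b) hν0.le ha.le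
  have hre := fun {a b : ℝ} (ha : 0 < a) ↦
    isSturmLiouvilleSolution_hankelFun Complex.reCLM (b := b) hν ha
  have him := fun {a b : ℝ} (ha : 0 < a) ↦
    isSturmLiouvilleSolution_hankelFun Complex.imCLM (b := b) hν ha
  simp only [Complex.reCLM_apply] at hre
  simp only [Complex.imCLM_apply] at him
  set c := besselXDeriv ν x * (hankelFun ν x).im - besselJ ν x * (hankelXDeriv ν x).im with hc
  set d := besselXDeriv ν x * (hankelFun ν x).re - besselJ ν x * (hankelXDeriv ν x).re with hd
  set e := (hankelXDeriv ν x).re * (hankelFun ν x).im -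
    (hankelFun ν x).re * (hankelXDeriv ν x).im with he
  have hrelation : ∀ y ∈ Ioo 0 x, y ^ ν * besselJ ν y * e -
      ((y ^ ν : ℝ) * hankelFun ν y).re * c + ((y ^ ν : ℝ) * hankelFun ν y).im * d = 0 := by
    intro y hy
    rw [hc, hd, he, (hre hy.1).wronskian_eq (him hy.1) hy.2,
      (hJ hy.1).wronskian_eq (him hy.1) hy.2, (hJ hy.1).wronskian_eq (hre hy.1) hy.2,
      Complex.re_ofReal_mul, Complex.im_ofReal_mul]
    ring
  have hlim := tendsto_rpow_mul_hankelFun hν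
  have hlimit := (((tendsto_rpow_mul_besselJ hν0).mul_const e).sub
    (((Complex.continuous_re.tendsto _).comp hlim).mul_const c)).add
    (((Complex.continuous_im.tendsto _).comp hlim).mul_const d)
  have hzero := tendsto_nhds_unique hlimit ((tendsto_const_nhds (x := 0)).congr' <| by
    filter_upwards [Ioo_mem_nhdsGT hx] with y hy using (hrelation y hy).symm)
  simpa [(Real.Gamma_pos_of_pos (by positivity : 0 < 2 * ν)).ne'] using hzero

lemma im_hankelFun_eq_zero (hν : 1 / 2 < ν) (hx : 0 < x) (hJx : besselJ ν x = 0) :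
    (hankelFun ν x).im = 0 := by
  have hW := wronskian_besselJ_im_hankelFun hν hx
  rw [hJx, zero_mul, sub_zero] at hW
  exact (mul_eq_zero.1 hW).resolve_left (besselXDeriv_ne_zero (by linarith) hx hJx)

lemma im_exp_mul_hankelIntegral_eq_zero (hν : 1 / 2 < ν) (n : ℕ) :
    (Complex.exp ((besselZero ν n - (n + 1) * π : ℝ) * Complex.I) *
      hankelIntegral (ν - 1 / 2) (besselZero ν n)⁻¹ 1).im = 0 := by
  have hν0 : 0 ≤ ν := by linarith
  have hpos := besselZero_pos hν0 n
  have him := im_hankelFun_eq_zero hν hpos (besselJ_besselZero hν0 n)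
  rw [hankelFun_eq hpos, Complex.im_ofReal_mul, mul_eq_zero] at him
  have hexp : Complex.exp ((besselZero ν n - (n + 1) * π : ℝ) * Complex.I) =
      ((-1) ^ (n + 1) : ℝ) * Complex.exp (besselZero ν n * Complex.I) := by
    rw [show ((besselZero ν n - (n + 1) * π : ℝ) : ℂ) * Complex.I =
      (n + 1 : ℕ) * -(π * Complex.I) + besselZero ν n * Complex.I by push_cast; ring,
      Complex.exp_add, Complex.exp_nat_mul, Complex.exp_neg, Complex.exp_pi_mul_I]
    norm_num
  rw [hexp, mul_assoc, Complex.im_ofReal_mul, him.resolve_left (by positivity), mul_zero]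

lemma exists_int_eq_of_tendsto_besselZero_sub (hν : 1 / 2 < ν) {M : ℝ}
    (hM : Tendsto (fun n : ℕ ↦ besselZero ν n - (n + 1) * π) atTop (𝓝 M)) :
    ∃ k : ℤ, M = (ν - 1 / 2) * (π / 2) + k * π := by
  have hexp : Continuous fun t : ℝ ↦ Complex.exp (t * Complex.I) := by fun_prop
  have hlim := (Complex.continuous_im.tendsto _).comp (((hexp.tendsto M).comp hM).mul
    ((tendsto_hankelIntegral_inv (sub_pos.2 hν)).comp (tendsto_besselZero_atTop hν)))
  have hzero := tendsto_nhds_unique hlim ((tendsto_const_nhds (x := 0)).congr fun n ↦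
    (im_exp_mul_hankelIntegral_eq_zero hν n).symm)
  rw [mul_left_comm, ← Complex.exp_add, ← add_mul, ← Complex.ofReal_add, Complex.im_ofReal_mul,
    Complex.exp_ofReal_mul_I_im, mul_eq_zero] at hzero
  have hΓ : 0 < Real.Gamma (ν - 1 / 2 + 1) := Real.Gamma_pos_of_pos (by linarith)
  obtain ⟨k, hk⟩ := Real.sin_eq_zero_iff.1 (hzero.resolve_left (mul_pos (by positivity) hΓ).ne')
  exact ⟨k, by linarith⟩

end HankelAsymptotics

section McMahon

variable {μ ν : ℝ}

lemma tendsto_besselZero_sub_of_le_add_one (hν : 1 / 2 ≤ ν) (hνμ : ν < μ) (hμν : μ ≤ ν + 1)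
    (h : Tendsto (fun n : ℕ ↦ besselZero ν n - (n + 1) * π) atTop
      (𝓝 ((ν - 1 / 2) * (π / 2)))) :
    Tendsto (fun n : ℕ ↦ besselZero μ n - (n + 1) * π) atTop (𝓝 ((μ - 1 / 2) * (π / 2))) := by
  have hν0 : 0 ≤ ν := by linarith
  have hμ : 1 / 2 < μ := hν.trans_lt hνμ
  obtain ⟨M, hM⟩ := exists_tendsto_besselZero_sub hμ
  obtain ⟨k, hk⟩ := exists_int_eq_of_tendsto_besselZero_sub hμ hM
  have hlower : (ν - 1 / 2) * (π / 2) ≤ M := le_of_tendsto_of_tendsto' h hM fun n ↦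
    sub_le_sub_right (besselZero_lt_besselZero hν0 hνμ n).le _
  have hupper : M ≤ (ν - 1 / 2) * (π / 2) + π := by
    refine le_of_tendsto_of_tendsto' hM (((tendsto_add_atTop_iff_nat 1).2 h).add_const π) fun n ↦ ?_
    have hle : besselZero μ n ≤ besselZero (ν + 1) n := hμν.eq_or_lt.elim (fun h ↦ h ▸ le_rfl)
      fun h ↦ (besselZero_lt_besselZero (by linarith) h n).le
    have hlt := besselZero_add_one_lt hν0 n
    push_cast
    linarith
  have hk0 : k = 0 := by
    have h₁ : ((-1 : ℤ) : ℝ) < k := by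
      push_cast
      nlinarith [pi_pos]
    have h₂ : (k : ℝ) < ((1 : ℤ) : ℝ) := by
      push_cast
      nlinarith [pi_pos]
    rw [Int.cast_lt] at h₁ h₂
    lia
  rwa [hk, hk0, Int.cast_zero, zero_mul, add_zero] at hM

/-- The leading term of **McMahon's expansion** of the zeros of the Bessel function `J_ν`. -/
theorem tendsto_besselZero_sub (hν : 1 / 2 ≤ ν) :
    Tendsto (fun n : ℕ ↦ besselZero ν n - (n + 1) * π) atTop (𝓝 ((ν - 1 / 2) * (π / 2))) := by
  obtain ⟨N, hN⟩ := exists_nat_ge (ν - 1 / 2)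
  induction N generalizing ν with
  | zero =>
    obtain rfl : ν = 1 / 2 := by linarith [hN.trans_eq Nat.cast_zero]
    simp only [besselZero_one_half, sub_self, zero_mul, tendsto_const_nhds]
  | succ N ih =>
    push_cast at hN
    rcases le_or_gt ν (1 / 2 + N) with h | h
    · exact ih hν (by linarith)
    · exact tendsto_besselZero_sub_of_le_add_one (by simp) h (by linarith)
        (ih (by simp) (by linarith))

lemma tendsto_besselPhase_besselZero_sub (hν : 1 / 2 < ν) :
    Tendsto (fun n : ℕ ↦ besselPhase ν (besselZero ν n) - (n + 1) * π) atTop (𝓝 (-(π / 4))) := by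
  have hlim := (tendsto_besselZero_sub hν.le).sub
    ((tendsto_sub_besselPhase ν).comp (tendsto_besselZero_atTop hν))
  refine (hlim.congr fun n ↦ ?_).trans_eq ?_
  · simp only [Function.comp_apply]
    ring
  · ring_nf

end McMahon

section UniformPhase

variable {ν x : ℝ}

lemma le_besselPhase_besselZero (hν : 1 / 2 < ν) (n : ℕ) :
    (n + 1) * π - π / 4 ≤ besselPhase ν (besselZero ν n) := by
  have h := (antitone_besselPhase_besselZero (by linarith)).le_of_tendsto
    (tendsto_besselPhase_besselZero_sub hν) n
  linarith

lemma le_besselZero_sq_sub_sq (hν : 1 / 2 < ν) (n : ℕ) :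
    4 * ((n : ℝ) + 1) ^ 2 ≤ besselZero ν n ^ 2 - ν ^ 2 := by
  have hsqrt : 2 * ((n : ℝ) + 1) ≤ √(besselZero ν n ^ 2 - ν ^ 2) :=
    calc 2 * ((n : ℝ) + 1) ≤ (n + 1) * π - π / 4 := by
          nlinarith [pi_gt_three, (n.cast_nonneg : (0 : ℝ) ≤ n)]
      _ ≤ besselPhase ν (besselZero ν n) := le_besselPhase_besselZero hν n
      _ ≤ √(besselZero ν n ^ 2 - ν ^ 2) := besselPhase_le_sqrt (by linarith) _
  have hsq := (Real.le_sqrt' (by positivity)).1 hsqrt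
  linarith

lemma sub_sq_div_lt_wkbPotential {B N t : ℝ} (hν : 0 ≤ ν) (ht : ν < t) (hN : 0 < N) (hB : 0 < B)
    (hS : 4 * N ^ 2 ≤ t ^ 2 - ν ^ 2)
    (hBS : t ^ 2 * (t ^ 2 + 4 * ν ^ 2) ≤ B * (t ^ 2 - ν ^ 2) ^ 2) :
    t - ν ^ 2 / t < wkbPotential ν (1 + B / N ^ 2) t := by
  have ht0 : 0 < t := hν.trans_lt ht
  have hS0 := sq_sub_sq_pos hν ht
  set S := t ^ 2 - ν ^ 2 with hSdef
  have hω : 2 * B / N ^ 2 ≤ (1 + B / N ^ 2) ^ 2 - 1 := by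
    have : (1 + B / N ^ 2) ^ 2 - 1 = 2 * B / N ^ 2 + (B / N ^ 2) ^ 2 := by ring
    rw [this]
    exact le_add_of_nonneg_right (sq_nonneg _)
  have hlarge : 8 * B ≤ S * ((1 + B / N ^ 2) ^ 2 - 1) :=
    calc 8 * B = 4 * N ^ 2 * (2 * B / N ^ 2) := by field_simp; norm_num
      _ ≤ S * ((1 + B / N ^ 2) ^ 2 - 1) := mul_le_mul hS hω (by positivity) hS0.le
  have hdiff : wkbPotential ν (1 + B / N ^ 2) t - (t - ν ^ 2 / t) =
      (4 * S ^ 2 * (S * ((1 + B / N ^ 2) ^ 2 - 1)) - t ^ 2 * (t ^ 2 + 4 * ν ^ 2)) /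
        (4 * t * S ^ 2) := by
    have hq : t - ν ^ 2 / t = S / t := by rw [hSdef]; field_simp
    rw [hq, wkbPotential, ← hSdef]
    field_simp
    ring
  rw [← sub_pos, hdiff]
  refine div_pos (sub_pos.2 ?_) (by positivity)
  nlinarith [mul_le_mul_of_nonneg_left hlarge (by positivity : 0 ≤ 4 * S ^ 2),
    mul_pos hB (pow_pos hS0 2)]

lemma sq_mul_sq_add_le {N t : ℝ} (hν : 0 ≤ ν) (hνN : ν ≤ x * N) (hS : 4 * N ^ 2 ≤ t ^ 2 - ν ^ 2) :
    t ^ 2 * (t ^ 2 + 4 * ν ^ 2) ≤ (1 + 5 * x ^ 2 / 4) ^ 2 * (t ^ 2 - ν ^ 2) ^ 2 := by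
  have hν2 : ν ^ 2 ≤ x ^ 2 / 4 * (t ^ 2 - ν ^ 2) :=
    calc ν ^ 2 ≤ (x * N) ^ 2 := by gcongr
      _ = x ^ 2 / 4 * (4 * N ^ 2) := by ring
      _ ≤ x ^ 2 / 4 * (t ^ 2 - ν ^ 2) := by gcongr
  have hle : t ^ 2 + 4 * ν ^ 2 ≤ (1 + 5 * x ^ 2 / 4) * (t ^ 2 - ν ^ 2) := by linarith
  calc t ^ 2 * (t ^ 2 + 4 * ν ^ 2) ≤ (t ^ 2 + 4 * ν ^ 2) * (t ^ 2 + 4 * ν ^ 2) := by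
        gcongr
        exact le_add_of_nonneg_right (by positivity)
    _ ≤ ((1 + 5 * x ^ 2 / 4) * (t ^ 2 - ν ^ 2)) * ((1 + 5 * x ^ 2 / 4) * (t ^ 2 - ν ^ 2)) :=
        mul_self_le_mul_self (by positivity) hle
    _ = (1 + 5 * x ^ 2 / 4) ^ 2 * (t ^ 2 - ν ^ 2) ^ 2 := by ring

lemma pi_sub_le_besselPhase_gap (hν : 1 / 2 < ν) {n : ℕ} (hνn : ν ≤ x * (n + 1)) :
    π - π * (1 + 5 * x ^ 2 / 4) ^ 2 / ((n : ℝ) + 1) ^ 2 ≤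
      besselPhase ν (besselZero ν (n + 1)) - besselPhase ν (besselZero ν n) := by
  have hν0 : 0 ≤ ν := by linarith
  set B := (1 + 5 * x ^ 2 / 4) ^ 2
  set ω := 1 + B / ((n : ℝ) + 1) ^ 2 with hω
  have hω0 : 0 < ω := by positivity
  have hgap : π < ω * (besselPhase ν (besselZero ν (n + 1)) - besselPhase ν (besselZero ν n)) := by
    refine pi_lt_of_lt_wkbPotential hν0 hν0 hω0 (lt_besselZero hν0 n)
      (strictMono_besselZero hν0 n.lt_succ_self) (besselJ_besselZero hν0 n)
      (besselJ_besselZero hν0 (n + 1)) (fun t ht ↦ besselJ_ne_zero_of_mem_Ioo hν0 ht)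
      fun t ht ↦ ?_
    have hS : 4 * ((n : ℝ) + 1) ^ 2 ≤ t ^ 2 - ν ^ 2 := (le_besselZero_sq_sub_sq hν n).trans
      (sub_le_sub_right (pow_le_pow_left₀ (besselZero_pos hν0 n).le ht.1.le 2) _)
    exact sub_sq_div_lt_wkbPotential hν0 ((lt_besselZero hν0 n).trans ht.1) (by positivity)
      (by positivity) hS (sq_mul_sq_add_le hν0 hνn hS)
  refine le_of_mul_le_mul_left (le_trans ?_ hgap.le) hω0
  calc ω * (π - π * B / ((n : ℝ) + 1) ^ 2) = π - π * (B / ((n : ℝ) + 1) ^ 2) ^ 2 := by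
        rw [hω]; ring
    _ ≤ π := sub_le_self _ (by positivity)

lemma one_div_sq_le_two_div_sub_two_div (n : ℕ) :
    1 / ((n : ℝ) + 1) ^ 2 ≤ 2 / (n + 1) - 2 / ((n + 1 : ℕ) + 1) := by
  have hdiff : 2 / ((n : ℝ) + 1) - 2 / ((n + 1 : ℕ) + 1) - 1 / ((n : ℝ) + 1) ^ 2 =
      n / ((n + 1) ^ 2 * (n + 2)) := by
    push_cast
    field_simp
    ring
  rw [← sub_nonneg, hdiff]
  positivity

-- Subtracting the telescoping correction `2 π B / (n + 1)` makes the phase error monotone in `n`.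
lemma besselPhase_besselZero_le (hν : 1 / 2 < ν) (hx : 0 ≤ x) {k : ℕ} (hνk : ν ≤ x * (k + 1)) :
    besselPhase ν (besselZero ν k) - (k + 1) * π ≤
      -(π / 4) + 2 * π * (1 + 5 * x ^ 2 / 4) ^ 2 / (k + 1) := by
  set B := (1 + 5 * x ^ 2 / 4) ^ 2
  have hmono : MonotoneOn (fun n : ℕ ↦ besselPhase ν (besselZero ν n) - (n + 1) * π -
      2 * π * B / (n + 1)) (Ici k) := by
    refine monotoneOn_nat_Ici_of_le_succ fun n hn ↦ ?_
    have hνn : ν ≤ x * (n + 1) := hνk.trans (by gcongr)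
    have hgap := pi_sub_le_besselPhase_gap hν hνn
    have hstep : π * B / ((n : ℝ) + 1) ^ 2 ≤
        2 * π * B / (n + 1) - 2 * π * B / ((n + 1 : ℕ) + 1) :=
      calc π * B / ((n : ℝ) + 1) ^ 2 = π * B * (1 / ((n : ℝ) + 1) ^ 2) := by ring
        _ ≤ π * B * (2 / (n + 1) - 2 / ((n + 1 : ℕ) + 1)) := by
            gcongr
            exact one_div_sq_le_two_div_sub_two_div n
        _ = 2 * π * B / (n + 1) - 2 * π * B / ((n + 1 : ℕ) + 1) := by ring
    push_cast at hgap hstep ⊢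
    linarith
  have hlim : Tendsto (fun n : ℕ ↦ besselPhase ν (besselZero ν n) - (n + 1) * π -
      2 * π * B / (n + 1)) atTop (𝓝 (-(π / 4))) := by
    simpa using (tendsto_besselPhase_besselZero_sub hν).sub
      (tendsto_const_nhds.div_atTop
        (tendsto_atTop_add_const_right _ 1 tendsto_natCast_atTop_atTop))
  have hle := ge_of_tendsto hlim (eventually_atTop.2 ⟨k, fun n hn ↦ hmono self_mem_Ici hn hn⟩)
  linarith

theorem tendsto_besselPhase_besselZero_mul_sub (hx : 0 < x) :
    Tendsto (fun n : ℕ ↦ besselPhase (x * (n + 1)) (besselZero (x * (n + 1)) n) - (n + 1) * π)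
      atTop (𝓝 (-(π / 4))) := by
  have hN : Tendsto (fun n : ℕ ↦ (n : ℝ) + 1) atTop atTop :=
    tendsto_atTop_add_const_right _ 1 tendsto_natCast_atTop_atTop
  have hlarge := (hN.const_mul_atTop hx).eventually_gt_atTop (1 / 2)
  have hupper : Tendsto (fun n : ℕ ↦ -(π / 4) + 2 * π * (1 + 5 * x ^ 2 / 4) ^ 2 / (n + 1)) atTop
      (𝓝 (-(π / 4))) := by
    simpa using (tendsto_const_nhds.div_atTop hN).const_add (-(π / 4))
  refine tendsto_of_tendsto_of_tendsto_of_le_of_le' tendsto_const_nhds hupper ?_ ?_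
  · filter_upwards [hlarge] with n hn
    linarith [le_besselPhase_besselZero hn n]
  · filter_upwards [hlarge] with n hn using besselPhase_besselZero_le hn hx.le le_rfl

end UniformPhase

section LinearGrowth

lemma tendsto_of_tendsto_comp_strictMonoOn {α : Type*} {l : Filter α} {f : ℝ → ℝ} {s : Set ℝ}
    {a : ℝ} {y : α → ℝ} (hf : StrictMonoOn f s) (hs : s ∈ 𝓝 a) (hy : ∀ᶠ i in l, y i ∈ s)
    (h : Tendsto (fun i ↦ f (y i)) l (𝓝 (f a))) : Tendsto y l (𝓝 a) := by
  have ha := mem_of_mem_nhds hs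
  refine tendsto_order.2 ⟨fun b hb ↦ ?_, fun b hb ↦ ?_⟩
  · obtain ⟨c, hcs, hbc, hca⟩ := Filter.nonempty_of_mem
      (inter_mem (mem_nhdsWithin_of_mem_nhds hs) (Ioo_mem_nhdsLT hb))
    filter_upwards [hy, h.eventually_const_lt (hf hcs ha hca)] with i hi hlt
    exact hbc.trans ((hf.lt_iff_lt hcs hi).1 hlt)
  · obtain ⟨c, hcs, hac, hcb⟩ := Filter.nonempty_of_mem
      (inter_mem (mem_nhdsWithin_of_mem_nhds hs) (Ioo_mem_nhdsGT hb))
    filter_upwards [hy, h.eventually_lt_const (hf ha hcs hac)] with i hi hlt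
    exact ((hf.lt_iff_lt hi hcs).1 hlt).trans hcb

lemma tendsto_mul_sub_of_hasDerivAt {α : Type*} {l : Filter α} {f : ℝ → ℝ} {d a b : ℝ}
    {c y : α → ℝ} (hf : HasDerivAt f d a) (hd : d ≠ 0) (hy : Tendsto y l (𝓝 a))
    (h : Tendsto (fun i ↦ c i * (f (y i) - f a)) l (𝓝 b)) :
    Tendsto (fun i ↦ c i * (y i - a)) l (𝓝 (b / d)) := by
  have hslope : Tendsto (fun i ↦ dslope f a (y i)) l (𝓝 d) := by
    have := (continuousAt_dslope_same.2 hf.differentiableAt).tendsto.comp hy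
    rwa [dslope_same, hf.deriv] at this
  refine (h.div hslope hd).congr' ?_
  filter_upwards [hslope.eventually_ne hd] with i hi
  rw [Pi.div_apply, ← sub_smul_dslope, smul_eq_mul, ← mul_assoc, mul_div_cancel_right₀ _ hi]

theorem tendsto_besselZero_mul_sub {x ι : ℝ} (hx : 0 < x) (hxι : x < ι) (hι : besselPhase x ι = π) :
    Tendsto (fun n : ℕ ↦ besselZero (x * (n + 1)) n - (n + 1) * ι) atTop
      (𝓝 (-(π / 4) / (√(ι ^ 2 - x ^ 2) / ι))) := by
  set y : ℕ → ℝ := fun n ↦ besselZero (x * (n + 1)) n / (n + 1)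
  have hN : Tendsto (fun n : ℕ ↦ (n : ℝ) + 1) atTop atTop :=
    tendsto_atTop_add_const_right _ 1 tendsto_natCast_atTop_atTop
  have hphase : Tendsto (fun n : ℕ ↦ ((n : ℝ) + 1) * (besselPhase x (y n) - besselPhase x ι)) atTop
      (𝓝 (-(π / 4))) := by
    refine (tendsto_besselPhase_besselZero_mul_sub hx).congr fun n ↦ ?_
    have hn : (0 : ℝ) < n + 1 := by positivity
    rw [hι, mul_sub, ← besselPhase_mul hn, mul_div_cancel₀ _ hn.ne', mul_comm x]
  have hphase_lim : Tendsto (fun n ↦ besselPhase x (y n)) atTop (𝓝 (besselPhase x ι)) := by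
    refine tendsto_sub_nhds_zero_iff.1 ((hphase.div_atTop hN).congr fun n ↦ ?_)
    exact mul_div_cancel_left₀ _ (by positivity)
  have hy_lim : Tendsto y atTop (𝓝 ι) :=
    tendsto_of_tendsto_comp_strictMonoOn (strictMonoOn_besselPhase hx.le) (Ioi_mem_nhds hxι)
      (Eventually.of_forall fun n ↦ (lt_div_iff₀ (by positivity)).2
        (lt_besselZero (by positivity) n)) hphase_lim
  refine (tendsto_mul_sub_of_hasDerivAt (hasDerivAt_besselPhase hx.le hxι)
    (div_pos (sqrt_pos.2 (sq_sub_sq_pos hx.le hxι)) (hx.trans hxι)).ne' hy_lim hphase).congr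
    fun n ↦ ?_
  rw [mul_sub, mul_div_cancel₀ _ (by positivity)]

end LinearGrowth

section LimitConstant

variable {x φ : ℝ}

lemma sqrt_div_sin_sq_sub_sq (hx : 0 ≤ x) (hsin : 0 < sin φ) (hcos : 0 ≤ cos φ) :
    √((x / sin φ) ^ 2 - x ^ 2) = x / sin φ * cos φ := by
  have hsq : (x / sin φ) ^ 2 - x ^ 2 = (x / sin φ * cos φ) ^ 2 := by
    rw [mul_pow, cos_sq']
    field_simp
  rw [hsq, sqrt_sq (by positivity)]

lemma besselPhase_div_sin (hx : 0 < x) (hφ : φ ∈ Ioo 0 (π / 2)) :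
    besselPhase x (x / sin φ) = x * (cos φ - (π / 2 - φ) * sin φ) / sin φ := by
  obtain ⟨hφ0, hφπ⟩ := hφ
  have hsin : 0 < sin φ := sin_pos_of_pos_of_lt_pi hφ0 (by linarith)
  have hcos : 0 ≤ cos φ := cos_nonneg_of_mem_Icc ⟨by linarith, hφπ.le⟩
  have harccos : arccos (x / (x / sin φ)) = π / 2 - φ := by
    rw [div_div_cancel₀ hx.ne', ← cos_pi_div_two_sub, arccos_cos] <;> linarith
  rw [besselPhase, sqrt_div_sin_sq_sub_sq hx.le hsin hcos, harccos]
  field_simp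

lemma inv_cos_le_exp (hcos : 0 < cos φ) (hsin : 0 ≤ sin φ) (h : sin φ ≤ x * cos φ) :
    (cos φ)⁻¹ ≤ exp x :=
  have hone : 1 ≤ cos φ * (x + 1) := by nlinarith [sin_sq_add_cos_sq φ]
  calc (cos φ)⁻¹ ≤ (cos φ)⁻¹ * (cos φ * (x + 1)) := le_mul_of_one_le_right (by positivity) hone
    _ = x + 1 := inv_mul_cancel_left₀ hcos.ne' _
    _ ≤ exp x := add_one_le_exp x

lemma tendsto_besselZero_sub_mul_div_sin (hx : 0 < x) (hφ : φ ∈ Ioo 0 (π / 2))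
    (heq : π * sin φ = x * (cos φ - (π / 2 - φ) * sin φ)) :
    Tendsto (fun n : ℕ ↦ besselZero (x * (n + 1)) n - (n + 1) * (x / sin φ)) atTop
      (𝓝 (-(π / 4) / cos φ)) := by
  have hsin : 0 < sin φ := sin_pos_of_mem_Ioo ⟨hφ.1, by linarith [hφ.1, hφ.2]⟩
  have hcos : 0 < cos φ := cos_pos_of_mem_Ioo ⟨by linarith [hφ.1, hφ.2], hφ.2⟩
  have hlt : x < x / sin φ :=
    (lt_div_iff₀ hsin).2 (mul_lt_of_lt_one_right hx (by nlinarith [sin_sq_add_cos_sq φ]))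
  have hphase : besselPhase x (x / sin φ) = π := by
    rw [besselPhase_div_sin hx hφ, ← heq, mul_div_cancel_right₀ _ hsin.ne']
  have hlim := tendsto_besselZero_mul_sub hx hlt hphase
  rwa [sqrt_div_sin_sq_sub_sq hx.le hsin hcos.le, mul_div_cancel_left₀ _ (by positivity)] at hlim

lemma neg_pi_div_four_div_cos_mem_Ioo (hx : 0 < x) (hφ : φ ∈ Ioo 0 (π / 2))
    (heq : π * sin φ = x * (cos φ - (π / 2 - φ) * sin φ)) {ε : ℝ} (hε : 0 < ε) :
    -(π / 4) / cos φ ∈ Ioo (-exp ((1 / 3 + ε) * x) * π / 4) (-(1 - ε) * π / 4) := by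
  have hsin : 0 < sin φ := sin_pos_of_mem_Ioo ⟨hφ.1, by linarith [hφ.1, hφ.2]⟩
  have hcos : 0 < cos φ := cos_pos_of_mem_Ioo ⟨by linarith [hφ.1, hφ.2], hφ.2⟩
  have hsin_le : sin φ ≤ x / 3 * cos φ := by
    have hpi : 3 * sin φ ≤ π * sin φ := by gcongr; exact pi_gt_three.le
    nlinarith [mul_pos hx (mul_pos (sub_pos.2 hφ.2) hsin)]
  have hlower : (cos φ)⁻¹ < exp ((1 / 3 + ε) * x) :=
    (inv_cos_le_exp hcos hsin.le hsin_le).trans_lt (exp_lt_exp.2 (by nlinarith))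
  have hupper : 1 - ε < (cos φ)⁻¹ := by linarith [(one_le_inv₀ hcos).2 (cos_le_one φ)]
  have hrw : -(π / 4) / cos φ = -(cos φ)⁻¹ * π / 4 := by field_simp
  rw [hrw]
  constructor <;> gcongr

end LimitConstant

theorem stmt_10 (x : ℝ) (hx : 0 < x) (φ : ℝ) (hφ : φ ∈ Set.Ioc 0 (Real.pi / 2))
    (hpos : 0 < Real.cos φ - (Real.pi / 2 - φ) * Real.sin φ)
    (heq : Real.sin φ / (Real.cos φ - (Real.pi / 2 - φ) * Real.sin φ) = x / Real.pi)
    (ι : ℝ) (hι : ι = x / Real.sin φ) :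
    ∀ ε : ℝ, 0 < ε → ∃ k₀ : ℕ, ∀ k : ℕ, k₀ ≤ k → ∀ j : ℝ,
      IsKthBesselZero (x * k) k j →
        -Real.exp ((1 / 3 + ε) * x) * Real.pi / (4 * k) ≤ j / k - ι ∧
        j / k - ι ≤ -(1 - ε) * Real.pi / (4 * k) := by
  intro ε hε
  have hφ' : φ ∈ Ioo 0 (π / 2) := ⟨hφ.1, hφ.2.lt_of_ne (by rintro rfl; simp at hpos)⟩
  have heq' : π * sin φ = x * (cos φ - (π / 2 - φ) * sin φ) := by
    rwa [div_eq_div_iff hpos.ne' pi_ne_zero, mul_comm] at heq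
  obtain ⟨hlower, hupper⟩ := neg_pi_div_four_div_cos_mem_Ioo hx hφ' heq' hε
  obtain ⟨N, hN⟩ := eventually_atTop.1 <|
    (tendsto_besselZero_sub_mul_div_sin hx hφ' heq').eventually (Icc_mem_nhds hlower hupper)
  refine ⟨N + 1, fun k hk j hj ↦ ?_⟩
  obtain ⟨n, rfl⟩ := Nat.exists_eq_add_of_le' ((Nat.le_add_left 1 N).trans hk)
  have hj_eq := eq_besselZero_of_isKthBesselZero (by positivity) hj
  have hmem := hN n (Nat.le_of_add_le_add_right hk)
  have hdiv : j / (n + 1 : ℕ) - ι = (j - (n + 1 : ℕ) * ι) / (n + 1 : ℕ) := by field_simp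
  rw [hdiv, ← div_div, ← div_div, hj_eq, hι]
  push_cast [Nat.add_sub_cancel]
  exact ⟨by gcongr; exact hmem.1, by gcongr; exact hmem.2⟩
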